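/- arXiv:1403.0547 — 8 statements merged into one kernel-verified Lean document; each statement's English description precedes it below -/
import Mathlib

section
/- Let I ≥ 2 be an integer, t ∈ [0,1], and a = (a_1,…,a_I) a real vector satisfying t·max_i a_i − min_i a_i ≤ 1, and suppose 2 + (1−t)(a_i + a_j) > 0 for all i,j. Then for all i ≠ j the factor 1 + (1+t)(a_i − a_j)/(2 + (1−t)(a_i + a_j)) lies in the interval [0,2]. Consequently, if 0 ≤ s_{ij} ≤ 1/2, then p_{ij} = s_{ij}·(1 + (1+t)(a_i − a_j)/(2 + (1−t)(a_i + a_j))) lies in [0,1]. -/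
/-!
With `A = 1 + x - t y` and `B = 1 + y - t x`, where `x = a_i` and `y = a_j`, the denominator
`2 + (1 - t)(x + y)` is `A + B` and the numerator `(1 + t)(x - y)` is `A - B`. The factor is
therefore `2A / (A + B)`, and the constraint `t max a - min a ≤ 1` makes `A` and `B` nonnegative.
-/

theorem mul_sub_le_mul_sup'_sub_inf' {ι R : Type*} [Ring R] [LinearOrder R] [IsOrderedRing R]
    {u : Finset ι} (hu : u.Nonempty) (a : ι → R) {t : R} (ht : 0 ≤ t) {i j : ι}
    (hi : i ∈ u) (hj : j ∈ u) :
    t * a j - a i ≤ t * u.sup' hu a - u.inf' hu a :=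
  sub_le_sub (mul_le_mul_of_nonneg_left (Finset.le_sup' a hj) ht) (Finset.inf'_le a hi)

section Factor

variable {K : Type*} [Field K]

/-- The factor by which the `QS_t` parametrization multiplies the symmetric entry `s_{ij}`, as a
function of `x = a_i` and `y = a_j`. Where the denominator vanishes it takes the junk value `1`. -/
def qsFactor (t x y : K) : K :=
  1 + (1 + t) * (x - y) / (2 + (1 - t) * (x + y))

theorem qsFactor_eq_two_mul_div {t x y : K} (hden : 2 + (1 - t) * (x + y) ≠ 0) :
    qsFactor t x y =
      2 * ((1 + x - t * y) / ((1 + x - t * y) + (1 + y - t * x))) := by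
  have den_eq : (1 + x - t * y) + (1 + y - t * x) = 2 + (1 - t) * (x + y) := by ring
  rw [qsFactor, den_eq]
  field_simp
  ring

variable [LinearOrder K] [IsStrictOrderedRing K]

theorem two_mul_div_add_mem_Icc {A B : K} (hA : 0 ≤ A) (hB : 0 ≤ B) :
    2 * (A / (A + B)) ∈ Set.Icc (0 : K) 2 := by
  have quotient_nonneg : 0 ≤ A / (A + B) := div_nonneg hA (add_nonneg hA hB)
  have quotient_le_one : A / (A + B) ≤ 1 :=
    div_le_one_of_le₀ (le_add_of_nonneg_right hB) (add_nonneg hA hB)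
  exact ⟨mul_nonneg zero_le_two quotient_nonneg, mul_le_of_le_one_right zero_le_two quotient_le_one⟩

theorem qsFactor_mem_Icc {t x y : K} (hxy : t * y - x ≤ 1) (hyx : t * x - y ≤ 1)
    (hden : 2 + (1 - t) * (x + y) ≠ 0) : qsFactor t x y ∈ Set.Icc (0 : K) 2 := by
  rw [qsFactor_eq_two_mul_div hden]
  exact two_mul_div_add_mem_Icc (by linarith) (by linarith)

theorem mul_mem_Icc_zero_one_of_le_half {s f : K} (hs : s ∈ Set.Icc (0 : K) (1 / 2))
    (hf : f ∈ Set.Icc (0 : K) 2) : s * f ∈ Set.Icc (0 : K) 1 := by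
  refine ⟨mul_nonneg hs.1 hf.1, ?_⟩
  calc s * f ≤ 1 / 2 * 2 := mul_le_mul hs.2 hf.2 hf.1 one_half_pos.le
    _ = 1 := one_div_mul_cancel two_ne_zero

theorem qs_t_factor_in_Icc_general {ι : Type*} {u : Finset ι} {hu : u.Nonempty} {t : K}
    (ht : 0 ≤ t) {a : ι → K} (hmaxmin : t * u.sup' hu a - u.inf' hu a ≤ 1)
    {i j : ι} (hi : i ∈ u) (hj : j ∈ u) (hden : 2 + (1 - t) * (a i + a j) ≠ 0) :
    qsFactor t (a i) (a j) ∈ Set.Icc (0 : K) 2 ∧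
      ∀ s ∈ Set.Icc (0 : K) (1 / 2), s * qsFactor t (a i) (a j) ∈ Set.Icc (0 : K) 1 := by
  have hij : t * a j - a i ≤ 1 := (mul_sub_le_mul_sup'_sub_inf' hu a ht hi hj).trans hmaxmin
  have hji : t * a i - a j ≤ 1 := (mul_sub_le_mul_sup'_sub_inf' hu a ht hj hi).trans hmaxmin
  have factor_mem := qsFactor_mem_Icc hij hji hden
  exact ⟨factor_mem, fun s hs => mul_mem_Icc_zero_one_of_le_half hs factor_mem⟩

end Factor

/-- Under the constraint t·max_i a_i − min_i a_i ≤ 1 and positivity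
of the denominators, the QS_t factor lies in [0,2]; hence if 0 ≤ s ≤ 1/2 the
resulting cell probability lies in [0,1]. -/
theorem qs_t_factor_in_Icc (I : ℕ) (hI : 2 ≤ I) (t : ℝ)
    (ht : t ∈ Set.Icc (0 : ℝ) 1)
    (a : Fin I → ℝ)
    (hmaxmin :
      t * Finset.univ.sup' (Finset.univ_nonempty_iff.mpr ⟨⟨0, by omega⟩⟩) a
        - Finset.univ.inf' (Finset.univ_nonempty_iff.mpr ⟨⟨0, by omega⟩⟩) a ≤ 1)
    (hden : ∀ i j : Fin I, 0 < 2 + (1 - t) * (a i + a j)) :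
    (∀ i j : Fin I, i ≠ j →
      1 + (1 + t) * (a i - a j) / (2 + (1 - t) * (a i + a j)) ∈ Set.Icc (0 : ℝ) 2) ∧
    (∀ i j : Fin I, i ≠ j → ∀ s : ℝ, 0 ≤ s → s ≤ 1 / 2 →
      s * (1 + (1 + t) * (a i - a j) / (2 + (1 - t) * (a i + a j))) ∈ Set.Icc (0 : ℝ) 1) := by
  have general (i j : Fin I) := qs_t_factor_in_Icc_general ht.1 hmaxmin
    (Finset.mem_univ i) (Finset.mem_univ j) (hden i j).ne'
  exact ⟨fun i j _ => (general i j).1, fun i j _ s hs₀ hs₁ => (general i j).2 s ⟨hs₀, hs₁⟩⟩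
end

section
/- Let I ≥ 2 and let x = (x_{ij}) be a symmetric I×I real matrix with all entries nonnegative and with x_{iI} > 0 for i = 1,…,I−1. Define the I×I matrix B by B_{ij} = x_{ij} for i ≠ j and B_{ii} = x_{ii} − x_{i+}, where x_{i+} = Σ_j x_{ij}. Then the kernel of B (acting on column vectors a ∈ ℝ^I by a ↦ B·a) is exactly the one-dimensional span of the all-ones vector; equivalently, B has rank I − 1 and B·a = 0 implies a_1 = a_2 = … = a_I. -/
/-!
Up to sign, `B` is a weighted graph Laplacian: `(B a)_i = ∑ j, x i j * (a j - a i)`. If this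
vanishes at an index `i` where `a` is maximal, then every term is nonpositive, hence zero, so `a` is
also maximal at each `j` with `0 < x i j`. When a root `r` can be reached from every index along
positive entries, `a` therefore attains its maximum at `r`; applied to `-a`, the same argument shows
that it attains its minimum at `r` too, so `a` is constant.
-/

open Matrix Relation

section Generator

variable {ι R : Type*} [Fintype ι] [DecidableEq ι]

/-- The matrix `x - diag (x · 1)`, the infinitesimal generator of the Markov chain on `ι` with jump
rates `x`. The diagonal entries of `x` cancel out. -/
def generatorMatrix [NonUnitalNonAssocRing R] (x : Matrix ι ι R) : Matrix ι ι R :=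
  x - diagonal fun i => ∑ k, x i k

theorem generatorMatrix_apply [NonUnitalNonAssocRing R] (x : Matrix ι ι R) (i j : ι) :
    generatorMatrix x i j = if i = j then x i i - ∑ k, x i k else x i j := by
  rw [generatorMatrix, Matrix.sub_apply, diagonal_apply]
  split_ifs with hij
  · rw [hij]
  · rw [sub_zero]

theorem generatorMatrix_mulVec_apply [NonUnitalNonAssocRing R] (x : Matrix ι ι R) (a : ι → R)
    (i : ι) : (generatorMatrix x *ᵥ a) i = ∑ j, x i j * (a j - a i) := by
  rw [generatorMatrix, sub_mulVec, Pi.sub_apply, mulVec_diagonal, Finset.sum_mul, mulVec,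
    dotProduct, ← Finset.sum_sub_distrib]
  simp only [mul_sub]

section Ordered

variable [Ring R] [LinearOrder R] [IsStrictOrderedRing R] {x : Matrix ι ι R} {a : ι → R}

theorem eq_of_generatorMatrix_mulVec_apply_eq_zero_of_forall_le {i j : ι}
    (hnonneg : ∀ k, i ≠ k → 0 ≤ x i k) (hzero : (generatorMatrix x *ᵥ a) i = 0)
    (hmax : ∀ k, a k ≤ a i) (hij : 0 < x i j) : a j = a i := by
  rw [generatorMatrix_mulVec_apply] at hzero
  have hterm : ∀ k ∈ Finset.univ, x i k * (a k - a i) ≤ 0 := by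
    intro k _
    rcases eq_or_ne i k with rfl | hik
    · rw [sub_self, mul_zero]
    · exact mul_nonpos_of_nonneg_of_nonpos (hnonneg k hik) (sub_nonpos.2 (hmax k))
  have hj : x i j * (a j - a i) = 0 :=
    (Finset.sum_eq_zero_iff_of_nonpos hterm).1 hzero j (Finset.mem_univ j)
  exact sub_eq_zero.1 ((mul_eq_zero.1 hj).resolve_left hij.ne')

theorem eq_of_generatorMatrix_mulVec_eq_zero_of_reflTransGen {i j : ι}
    (hnonneg : ∀ k l, k ≠ l → 0 ≤ x k l) (hzero : generatorMatrix x *ᵥ a = 0)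
    (hmax : ∀ k, a k ≤ a i) (hij : ReflTransGen (fun k l => 0 < x k l) i j) : a j = a i := by
  induction hij with
  | refl => rfl
  | @tail k l _ hkl hki =>
    have hmax_k : ∀ m, a m ≤ a k := fun m => (hmax m).trans_eq hki.symm
    exact (eq_of_generatorMatrix_mulVec_apply_eq_zero_of_forall_le (hnonneg k)
      (congrFun hzero k) hmax_k hkl).trans hki

theorem le_root_of_generatorMatrix_mulVec_eq_zero {r : ι}
    (hnonneg : ∀ i j, i ≠ j → 0 ≤ x i j)
    (hreach : ∀ i, ReflTransGen (fun k l => 0 < x k l) i r)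
    (hzero : generatorMatrix x *ᵥ a = 0) (i : ι) : a i ≤ a r := by
  have : Nonempty ι := ⟨r⟩
  obtain ⟨m, hmax⟩ := Finite.exists_max a
  exact (hmax i).trans_eq
    (eq_of_generatorMatrix_mulVec_eq_zero_of_reflTransGen hnonneg hzero hmax (hreach m)).symm

theorem generatorMatrix_mulVec_eq_zero_iff {r : ι} (hnonneg : ∀ i j, i ≠ j → 0 ≤ x i j)
    (hreach : ∀ i, ReflTransGen (fun k l => 0 < x k l) i r) :
    generatorMatrix x *ᵥ a = 0 ↔ ∃ c, ∀ i, a i = c := by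
  constructor
  · intro hzero
    have hzero_neg : generatorMatrix x *ᵥ (-a) = 0 := by rw [mulVec_neg, hzero, neg_zero]
    refine ⟨a r, fun i => le_antisymm ?_ ?_⟩
    · exact le_root_of_generatorMatrix_mulVec_eq_zero hnonneg hreach hzero i
    · exact neg_le_neg_iff.1
        (le_root_of_generatorMatrix_mulVec_eq_zero hnonneg hreach hzero_neg i)
  · rintro ⟨c, hc⟩
    ext i
    simp [generatorMatrix_mulVec_apply, hc]

end Ordered

theorem ker_generatorMatrix_mulVecLin [CommRing R] [LinearOrder R] [IsStrictOrderedRing R]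
    {x : Matrix ι ι R} {r : ι} (hnonneg : ∀ i j, i ≠ j → 0 ≤ x i j)
    (hreach : ∀ i, ReflTransGen (fun k l => 0 < x k l) i r) :
    LinearMap.ker (generatorMatrix x).mulVecLin = Submodule.span R {1} := by
  ext a
  rw [LinearMap.mem_ker, mulVecLin_apply, generatorMatrix_mulVec_eq_zero_iff hnonneg hreach,
    Submodule.mem_span_singleton]
  simp [funext_iff, eq_comm]

end Generator

theorem rank_add_one_eq_card_of_ker_mulVecLin_eq_span_singleton {m n K : Type*}
    [Fintype n] [Field K] {A : Matrix m n K} {v : n → K} (hv : v ≠ 0)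
    (hker : LinearMap.ker A.mulVecLin = Submodule.span K {v}) : A.rank + 1 = Fintype.card n := by
  rw [Matrix.rank, ← finrank_span_singleton (K := K) hv, ← hker,
    LinearMap.finrank_range_add_finrank_ker, Module.finrank_fintype_fun_eq_card]

theorem kernel_of_B_is_span_ones_general {ι K : Type*} [Fintype ι] [DecidableEq ι] [Field K]
    [LinearOrder K] [IsStrictOrderedRing K] (x : Matrix ι ι K) (r : ι)
    (hnonneg : ∀ i j, i ≠ j → 0 ≤ x i j)
    (hreach : ∀ i, ReflTransGen (fun k l => 0 < x k l) i r) :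
    (∀ a : ι → K, generatorMatrix x *ᵥ a = 0 ↔ ∃ c : K, ∀ i, a i = c) ∧
      (generatorMatrix x).rank + 1 = Fintype.card ι := by
  have : Nonempty ι := ⟨r⟩
  exact ⟨fun _ => generatorMatrix_mulVec_eq_zero_iff hnonneg hreach,
    rank_add_one_eq_card_of_ker_mulVecLin_eq_span_singleton one_ne_zero
      (ker_generatorMatrix_mulVecLin hnonneg hreach)⟩

/-- For a nonnegative symmetric matrix x with positive off-diagonal
entries in the last column, the matrix B = x − diag(x·1) has kernel exactly the
span of the all-ones vector, and rank I − 1. -/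
theorem kernel_of_B_is_span_ones (n : ℕ) (hn : 1 ≤ n)
    (x : Fin (n + 1) → Fin (n + 1) → ℝ)
    (hsymm : ∀ i j, x i j = x j i)
    (hnonneg : ∀ i j, 0 ≤ x i j)
    (hpos : ∀ i : Fin (n + 1), i ≠ Fin.last n → 0 < x i (Fin.last n))
    (B : Matrix (Fin (n + 1)) (Fin (n + 1)) ℝ)
    (hB : ∀ i j, B i j = if i = j then x i i - ∑ k, x i k else x i j) :
    (∀ a : Fin (n + 1) → ℝ, B.mulVec a = 0 ↔ ∃ c : ℝ, ∀ i, a i = c) ∧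
      B.rank = n := by
  obtain rfl : B = generatorMatrix (.of x) := by
    ext
    simp only [hB, generatorMatrix_apply, of_apply]
  simpa using kernel_of_B_is_span_ones_general (.of x) (Fin.last n) (fun i j _ => hnonneg i j)
    fun i => (eq_or_ne i (Fin.last n)).elim (fun h => h ▸ .refl) fun h => .single (hpos i h)
end

section
/- (Proposition 1: S = MH ∩ QS_t.) Let I ≥ 2, t ∈ [0,1], let x = (x_{ij}) be a symmetric I×I real matrix with x_{ij} > 0 for all i ≠ j and x_{ii} ≥ 0, with Σ_{i,j} x_{ij} = 1, and let a = (a_1,…,a_I) be a real vector satisfying Σ_{i=1}^I (x_{i+} − x_{ii}) a_i = 0. Define p_{ii} = x_{ii} and p_{ij} = x_{ij}(1 + a_i − t·a_j) for i ≠ j. If p satisfies marginal homogeneity, i.e. p_{i+} = p_{+i} for all i = 1,…,I, then a_1 = a_2 = … = a_I and p_{ij} = x_{ij} for all i,j; in particular p is a symmetric matrix. Conversely, if a_1 = … = a_I = 0 then p = x is symmetric and marginally homogeneous. -/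
/-!
The antisymmetric part of a `QS_t` table is `p i j - p j i = (1 + t) * (x i j * (a i - a j))`, so
marginal homogeneity says that `a` is harmonic for the graph Laplacian with edge weights `x`.
Pairing the Laplacian of `a` with `a` gives half the Dirichlet energy
`∑ i, ∑ j, x i j * (a i - a j) ^ 2`. It therefore vanishes, and `a` is constant along edges of
nonzero weight, hence constant if these connect all indices. The weighted-sum constraint then
makes the constant zero, unless there are no edges at all; in both cases `p = x`.
-/

section Dirichlet

variable {ι R : Type*} [Fintype ι] [CommRing R] {x : ι → ι → R} {a : ι → R}

theorem sum_sum_mul_sub_sq_eq_two_mul (hsymm : ∀ i j, x i j = x j i) :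
    ∑ i, ∑ j, x i j * (a i - a j) ^ 2 = 2 * ∑ i, a i * ∑ j, x i j * (a i - a j) := by
  have swap : ∑ i, ∑ j, a j * (x i j * (a j - a i)) = ∑ i, ∑ j, a i * (x i j * (a i - a j)) := by
    rw [Finset.sum_comm]
    exact Fintype.sum_congr _ _ fun i ↦ Fintype.sum_congr _ _ fun j ↦ by rw [hsymm j i]
  calc ∑ i, ∑ j, x i j * (a i - a j) ^ 2
      = ∑ i, ∑ j, a i * (x i j * (a i - a j)) + ∑ i, ∑ j, a j * (x i j * (a j - a i)) := by
        simp_rw [← Finset.sum_add_distrib]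
        congr! 2
        ring
    _ = 2 * ∑ i, a i * ∑ j, x i j * (a i - a j) := by
        simp_rw [swap, ← two_mul, Finset.mul_sum]

variable [LinearOrder R] [IsStrictOrderedRing R]

theorem eq_of_sum_mul_sub_eq_zero (hsymm : ∀ i j, x i j = x j i)
    (hnonneg : ∀ i j, i ≠ j → 0 ≤ x i j) (hharm : ∀ i, ∑ j, x i j * (a i - a j) = 0)
    {i j : ι} (hij : x i j ≠ 0) : a i = a j := by
  have term_nonneg : ∀ k l, 0 ≤ x k l * (a k - a l) ^ 2 := by
    intro k l
    obtain rfl | hkl := eq_or_ne k l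
    · simp
    · exact mul_nonneg (hnonneg k l hkl) (sq_nonneg _)
  have energy_eq_zero : ∑ k, ∑ l, x k l * (a k - a l) ^ 2 = 0 := by
    simp [sum_sum_mul_sub_sq_eq_two_mul hsymm, hharm]
  have row_eq_zero : ∑ l, x i l * (a i - a l) ^ 2 = 0 :=
    congrFun ((Fintype.sum_eq_zero_iff_of_nonneg fun k ↦
      Finset.sum_nonneg fun l _ ↦ term_nonneg k l).1 energy_eq_zero) i
  have term_eq_zero : x i j * (a i - a j) ^ 2 = 0 :=
    congrFun ((Fintype.sum_eq_zero_iff_of_nonneg (term_nonneg i)).1 row_eq_zero) j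
  exact sub_eq_zero.1 (sq_eq_zero_iff.1 ((mul_eq_zero.1 term_eq_zero).resolve_left hij))

theorem mul_eq_zero_of_sum_offDiag_mul_eq_zero (hnonneg : ∀ i j, i ≠ j → 0 ≤ x i j)
    (hconst : ∀ i j, a i = a j) (hconstr : ∑ i, ((∑ j, x i j) - x i i) * a i = 0)
    {i j : ι} (hij : i ≠ j) : x i j * a j = 0 := by
  classical
  simp_rw [hconst _ j, ← Finset.sum_mul, ← Finset.sum_erase_eq_sub (Finset.mem_univ _)]
    at hconstr
  have offDiag_nonneg : ∀ k, ∀ l ∈ Finset.univ.erase k, 0 ≤ x k l :=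
    fun k l hl ↦ hnonneg k l (Finset.ne_of_mem_erase hl).symm
  obtain total_eq_zero | ha := mul_eq_zero.1 hconstr
  · have row_eq_zero : ∑ l ∈ Finset.univ.erase i, x i l = 0 :=
      (Finset.sum_eq_zero_iff_of_nonneg fun k _ ↦ Finset.sum_nonneg (offDiag_nonneg k)).1
        total_eq_zero i (Finset.mem_univ i)
    have entry_eq_zero : x i j = 0 :=
      (Finset.sum_eq_zero_iff_of_nonneg (offDiag_nonneg i)).1 row_eq_zero j
        (Finset.mem_erase.2 ⟨hij.symm, Finset.mem_univ j⟩)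
    rw [entry_eq_zero, zero_mul]
  · rw [ha, mul_zero]

end Dirichlet

/-- The table `p` of the quasi-symmetry model `QS_t` in x-form, with asymmetry parameters `a`.
The symmetry of `x` and the weighted-sum constraint on `a` are not part of the definition. -/
def quasiSymmTable {ι R : Type*} [DecidableEq ι] [CommRing R] (t : R) (x : ι → ι → R) (a : ι → R) :
    ι → ι → R :=
  fun i j ↦ if i = j then x i i else x i j * (1 + a i - t * a j)

section QuasiSymmTable

variable {ι R : Type*} [DecidableEq ι] [CommRing R] {t : R} {x : ι → ι → R} {a : ι → R}

theorem quasiSymmTable_sub_swap (hsymm : ∀ i j, x i j = x j i) (i j : ι) :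
    quasiSymmTable t x a i j - quasiSymmTable t x a j i = (1 + t) * (x i j * (a i - a j)) := by
  obtain rfl | hij := eq_or_ne i j
  · simp
  · simp only [quasiSymmTable, if_neg hij, if_neg hij.symm, hsymm j i]
    ring

theorem quasiSymmTable_eq_of_mul_eq_zero (hconst : ∀ i j, a i = a j)
    (hzero : ∀ i j, i ≠ j → x i j * a j = 0) : quasiSymmTable t x a = x := by
  ext i j
  obtain rfl | hij := eq_or_ne i j
  · simp [quasiSymmTable]
  · rw [quasiSymmTable, if_neg hij, hconst i j]
    linear_combination (1 - t) * hzero i j hij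

theorem sum_mul_sub_eq_zero_of_marginal_eq [Fintype ι] [NoZeroDivisors R] (ht : t ≠ -1)
    (hsymm : ∀ i j, x i j = x j i)
    (hMH : ∀ i, ∑ j, quasiSymmTable t x a i j = ∑ j, quasiSymmTable t x a j i) (i : ι) :
    ∑ j, x i j * (a i - a j) = 0 := by
  have one_add_t_ne_zero : 1 + t ≠ 0 := fun h ↦ ht (eq_neg_of_add_eq_zero_right h)
  refine (mul_eq_zero.1 ?_).resolve_left one_add_t_ne_zero
  simp_rw [Finset.mul_sum, ← quasiSymmTable_sub_swap hsymm, Finset.sum_sub_distrib, hMH, sub_self]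

theorem symmetry_eq_MH_inter_QS_t_general [Fintype ι] [LinearOrder R] [IsStrictOrderedRing R]
    (ht : t ≠ -1) (hsymm : ∀ i j, x i j = x j i) (hnonneg : ∀ i j, i ≠ j → 0 ≤ x i j)
    (hconn : ∀ i j, Relation.ReflTransGen (fun k l ↦ x k l ≠ 0) i j)
    (hconstr : ∑ i, ((∑ j, x i j) - x i i) * a i = 0)
    (p : ι → ι → R) (hp : ∀ i j, p i j = quasiSymmTable t x a i j) :
    ((∀ i, ∑ j, p i j = ∑ j, p j i) →
      (∀ i j, a i = a j) ∧ (∀ i j, p i j = x i j) ∧ (∀ i j, p i j = p j i)) ∧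
    ((∀ i, a i = 0) →
      (∀ i j, p i j = x i j) ∧ (∀ i j, p i j = p j i) ∧ ∀ i, ∑ j, p i j = ∑ j, p j i) := by
  obtain rfl : p = quasiSymmTable t x a := funext₂ hp
  constructor
  · intro hMH
    have hharm := sum_mul_sub_eq_zero_of_marginal_eq ht hsymm hMH
    have hconst : ∀ i j, a i = a j := fun i j ↦ by
      induction hconn i j with
      | refl => rfl
      | tail _ hedge ih => exact ih.trans (eq_of_sum_mul_sub_eq_zero hsymm hnonneg hharm hedge)
    have hpx : quasiSymmTable t x a = x := quasiSymmTable_eq_of_mul_eq_zero hconst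
      fun _ _ ↦ mul_eq_zero_of_sum_offDiag_mul_eq_zero hnonneg hconst hconstr
    exact ⟨hconst, by simp [hpx], by simpa [hpx] using hsymm⟩
  · intro ha
    have hpx : quasiSymmTable t x a = x :=
      quasiSymmTable_eq_of_mul_eq_zero (by simp [ha]) (by simp [ha])
    rw [hpx]
    exact ⟨fun _ _ ↦ rfl, hsymm, fun i ↦ Finset.sum_congr rfl fun j _ ↦ hsymm i j⟩

end QuasiSymmTable

/-- Proposition 1: S = MH ∩ QS_t: Under the QS_t parametrization
in x-form with positive off-diagonal x-entries and the weighted-sum-to-zero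
constraint, marginal homogeneity forces all a_i to be equal and p = x (so p is
symmetric); conversely a ≡ 0 yields a symmetric, marginally homogeneous p = x. -/
theorem symmetry_eq_MH_inter_QS_t (I : ℕ) (hI : 2 ≤ I) (t : ℝ)
    (ht : t ∈ Set.Icc (0 : ℝ) 1)
    (x : Fin I → Fin I → ℝ)
    (hsymm : ∀ i j, x i j = x j i)
    (hpos : ∀ i j, i ≠ j → 0 < x i j)
    (hdiag : ∀ i, 0 ≤ x i i)
    (hsum : ∑ i, ∑ j, x i j = 1)
    (a : Fin I → ℝ)
    (hconstr : ∑ i, ((∑ j, x i j) - x i i) * a i = 0)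
    (p : Fin I → Fin I → ℝ)
    (hp : ∀ i j, p i j = if i = j then x i i else x i j * (1 + a i - t * a j)) :
    ((∀ i, (∑ j, p i j) = ∑ j, p j i) →
      (∀ i j, a i = a j) ∧ (∀ i j, p i j = x i j) ∧ (∀ i j, p i j = p j i)) ∧
    ((∀ i, a i = 0) →
      (∀ i j, p i j = x i j) ∧ (∀ i j, p i j = p j i) ∧
        ∀ i, (∑ j, p i j) = ∑ j, p j i) := by
  exact symmetry_eq_MH_inter_QS_t_general (by linarith [ht.1]) hsymm (fun i j h ↦ (hpos i j h).le)
    (fun i j ↦ (eq_or_ne i j).elim (· ▸ .refl) fun h ↦ .single (hpos i j h).ne') hconstr p hp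
end

section
/- Let C be an n-cycle (n ≥ 3) with distinct vertices v_1,…,v_n, and let P^C be its cycle polynomial, a polynomial with coefficients in ℚ[t] in the variables p_{ij} for directed edges (i,j) of C. Then substituting p_{ij} = x_{ij}(1 + a_i − t·a_j), where the x_{ij} are indeterminates subject to x_{ij} = x_{ji} and the a_i are indeterminates, yields the zero polynomial in ℚ[t][x_{ij}, a_i]. In other words, every cycle polynomial P^C is a polynomial relation among the QS_t model coordinates. -/
/-- Cyclic successor on `Fin n`. -/
def cycSucc {n : ℕ} (k : Fin n) : Fin n :=
  ⟨(k.val + 1) % n, Nat.mod_lt _ k.pos⟩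

/-- The coefficient `coeff(δ) ∈ R` (with `t ∈ R`) attached to an orientation
`δ` of the `n`-cycle, encoded as `δ : Fin n → Bool` where `δ k = true` means the
`k`-th edge is oriented in agreement with the distinguished directed cycle. -/
noncomputable def cycleCoeff {R : Type*} [CommRing R] (t : R) {n : ℕ}
    (δ : Fin n → Bool) : R :=
  let c : ℤ := 2 * ((Finset.univ.filter fun k => δ k = true).card : ℤ) - (n : ℤ)
  if c = 0 then 0
  else (if 0 < c then 1 else -1) *
    (if n % 2 = 0 then
      ∑ m ∈ Finset.range (c.natAbs / 2), t ^ ((n - c.natAbs) / 2 + 2 * m)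
    else
      ∑ m ∈ Finset.range c.natAbs, t ^ ((n - c.natAbs) / 2 + m))

/-- The cycle polynomial `P^C = Σ_δ coeff(δ)·p^δ` of the `n`-cycle with vertices
`v 0, …, v (n-1)`, evaluated at `t : R` and coordinates `p : V → V → R`. -/
noncomputable def cyclePoly {R : Type*} [CommRing R] {V : Type*} (t : R) (n : ℕ)
    (v : Fin n → V) (p : V → V → R) : R :=
  ∑ δ : Fin n → Bool, cycleCoeff t δ *
    ∏ k : Fin n, if δ k then p (v k) (v (cycSucc k)) else p (v (cycSucc k)) (v k)

/-!
Write `f` and `b` for the numbers of forward and backward edges of an orientation `δ`, and let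
`s` be the step of the exponents in `coeff(δ)`: `2` for even `n` and `1` for odd `n`. Then
`coeff(δ)` is the geometric sum `(t ^ f - t ^ b) / (t ^ s - 1)`, so for forward and backward edge
variables `p` and `q`
`(t ^ s - 1) * P^C = ∏ k, (t * p k + q k) - ∏ k, (p k + t * q k)`.
On the QS_t model `t * p k + q k` depends, up to the factor `x`, only on the head of the `k`-th
edge, and `p k + t * q k` is the same expression at its tail. Every vertex of the cycle is the head
of one edge and the tail of one edge, so the two products agree. The factor `t ^ s - 1` is cancelled
for an indeterminate `t`, where it is monic, and `t` is specialized afterwards.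
-/

open Finset Polynomial

section Coefficient

variable {R : Type*} [CommRing R] {n : ℕ}

/-- The number of edges on which the orientation `δ` agrees with the directed cycle. -/
def forwardCount (δ : Fin n → Bool) : ℕ := #{k | δ k = true}

/-- The number of edges on which the orientation `δ` disagrees with the directed cycle. -/
def backwardCount (δ : Fin n → Bool) : ℕ := #{k | δ k = false}

/-- The difference of consecutive exponents of `t` in the coefficients `cycleCoeff t δ` of the
`n`-cycle. -/
def exponentStep (n : ℕ) : ℕ := if n % 2 = 0 then 2 else 1

lemma exponentStep_ne_zero (n : ℕ) : exponentStep n ≠ 0 := by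
  unfold exponentStep
  split_ifs <;> norm_num

lemma forwardCount_add_backwardCount (δ : Fin n → Bool) :
    forwardCount δ + backwardCount δ = n := by
  simpa [forwardCount, backwardCount] using
    card_filter_add_card_filter_not (s := univ) (fun k => δ k = true)

lemma exponentStep_dvd_sub_of_add_eq {m f b : ℕ} (hsum : f + b = m) : exponentStep m ∣ f - b := by
  unfold exponentStep
  split_ifs with hm
  · omega
  · exact one_dvd _

lemma forwardCount_not (δ : Fin n → Bool) :
    forwardCount (fun k => !δ k) = backwardCount δ := by
  simp [forwardCount, backwardCount]

lemma backwardCount_not (δ : Fin n → Bool) :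
    backwardCount (fun k => !δ k) = forwardCount δ := by
  simp [forwardCount, backwardCount]

/-- The signed count `c(δ)` of forward minus backward edges. -/
def signedCount (δ : Fin n → Bool) : ℤ := 2 * forwardCount δ - n

lemma signedCount_not (δ : Fin n → Bool) :
    signedCount (fun k => !δ k) = -signedCount δ := by
  have hsum := forwardCount_add_backwardCount δ
  simp only [signedCount, forwardCount_not]
  omega

lemma cycleCoeff_eq (t : R) (δ : Fin n → Bool) :
    cycleCoeff t δ = (signedCount δ).sign *
      ∑ m ∈ range ((signedCount δ).natAbs / exponentStep n),
        t ^ ((n - (signedCount δ).natAbs) / 2 + exponentStep n * m) := by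
  change (if signedCount δ = 0 then 0 else (if 0 < signedCount δ then 1 else -1) * _) = _
  rcases lt_trichotomy (signedCount δ) 0 with hneg | hzero | hpos
  · rw [if_neg hneg.ne, if_neg hneg.not_gt, Int.sign_eq_neg_one_of_neg hneg, exponentStep]
    split_ifs <;> simp [signedCount, forwardCount]
  · simp [hzero]
  · rw [if_neg hpos.ne', if_pos hpos, Int.sign_eq_one_of_pos hpos, exponentStep]
    split_ifs <;> simp [signedCount, forwardCount]

lemma cycleCoeff_not (t : R) (δ : Fin n → Bool) :
    cycleCoeff t (fun k => !δ k) = -cycleCoeff t δ := by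
  simp [cycleCoeff_eq, signedCount_not]

lemma cycleCoeff_of_backwardCount_le (t : R) {δ : Fin n → Bool}
    (hle : backwardCount δ ≤ forwardCount δ) :
    cycleCoeff t δ = ∑ m ∈ range ((forwardCount δ - backwardCount δ) / exponentStep n),
      t ^ (backwardCount δ + exponentStep n * m) := by
  have hsum := forwardCount_add_backwardCount δ
  have hcount : signedCount δ = (forwardCount δ - backwardCount δ : ℕ) := by
    unfold signedCount
    omega
  have hexp : (n - (forwardCount δ - backwardCount δ)) / 2 = backwardCount δ := by omega
  rw [cycleCoeff_eq, hcount, Int.natAbs_natCast, hexp]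
  rcases hle.eq_or_lt with heq | hlt
  · simp [heq]
  · rw [Int.sign_eq_one_of_pos (by omega), Int.cast_one, one_mul]

lemma pow_sub_one_mul_sum_pow_add_mul {S : Type*} [Ring S] (t : S) (s b d : ℕ) :
    (t ^ s - 1) * ∑ m ∈ range d, t ^ (b + s * m) = t ^ (b + s * d) - t ^ b := by
  simp only [add_comm b, pow_add, pow_mul, ← sum_mul]
  rw [← mul_assoc, mul_geom_sum, sub_mul, one_mul]

lemma pow_sub_one_mul_cycleCoeff (t : R) (δ : Fin n → Bool) :
    (t ^ exponentStep n - 1) * cycleCoeff t δ = t ^ forwardCount δ - t ^ backwardCount δ := by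
  wlog hle : backwardCount δ ≤ forwardCount δ generalizing δ
  · have hrev := this (fun k => !δ k) (by
      rw [forwardCount_not, backwardCount_not]
      exact (not_le.mp hle).le)
    rw [cycleCoeff_not, forwardCount_not, backwardCount_not] at hrev
    linear_combination -hrev
  · rw [cycleCoeff_of_backwardCount_le t hle, pow_sub_one_mul_sum_pow_add_mul,
      Nat.mul_div_cancel' (exponentStep_dvd_sub_of_add_eq (forwardCount_add_backwardCount δ)),
      Nat.add_sub_cancel' hle]

lemma map_cycleCoeff {S : Type*} [CommRing S] (φ : R →+* S) (t : R) (δ : Fin n → Bool) :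
    φ (cycleCoeff t δ) = cycleCoeff (φ t) δ := by
  dsimp only [cycleCoeff]
  split_ifs <;> simp

end Coefficient

section EdgeVariables

variable {R : Type*} [CommRing R] {n : ℕ}

/-- The cycle polynomial as a function of the variables `p k` and `q k` of the two directions of
the `k`-th edge, forward and backward, without reference to vertices. -/
noncomputable def edgeCyclePoly (t : R) (p q : Fin n → R) : R :=
  ∑ δ : Fin n → Bool, cycleCoeff t δ * ∏ k, if δ k then p k else q k

lemma map_edgeCyclePoly {S : Type*} [CommRing S] (φ : R →+* S) (t : R) (p q : Fin n → R) :
    φ (edgeCyclePoly t p q) = edgeCyclePoly (φ t) (φ ∘ p) (φ ∘ q) := by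
  simp only [edgeCyclePoly, map_sum, map_mul, map_cycleCoeff, map_prod, apply_ite φ,
    Function.comp_apply]

lemma prod_add_eq_sum_prod_ite {ι S : Type*} [Fintype ι] [DecidableEq ι] [CommSemiring S]
    (p q : ι → S) :
    ∏ k, (p k + q k) = ∑ δ : ι → Bool, ∏ k, if δ k then p k else q k := by
  simpa using Fintype.prod_sum fun k (b : Bool) => if b then p k else q k

lemma prod_ite_mul_left {M : Type*} [CommMonoid M] (t : M) (p q : Fin n → M)
    (δ : Fin n → Bool) :
    ∏ k, (if δ k then t * p k else q k) =
      t ^ forwardCount δ * ∏ k, if δ k then p k else q k := by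
  rw [forwardCount, ← prod_const, prod_filter, ← prod_mul_distrib]
  exact prod_congr rfl fun k _ => by split_ifs <;> simp

lemma prod_ite_mul_right {M : Type*} [CommMonoid M] (t : M) (p q : Fin n → M)
    (δ : Fin n → Bool) :
    ∏ k, (if δ k then p k else t * q k) =
      t ^ backwardCount δ * ∏ k, if δ k then p k else q k := by
  rw [backwardCount, ← prod_const, prod_filter, ← prod_mul_distrib]
  exact prod_congr rfl fun k _ => by cases δ k <;> simp

lemma pow_sub_one_mul_edgeCyclePoly (t : R) (p q : Fin n → R) :
    (t ^ exponentStep n - 1) * edgeCyclePoly t p q =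
      ∏ k, (t * p k + q k) - ∏ k, (p k + t * q k) := by
  simp only [prod_add_eq_sum_prod_ite, prod_ite_mul_left, prod_ite_mul_right, edgeCyclePoly,
    mul_sum, ← sum_sub_distrib, ← sub_mul, ← pow_sub_one_mul_cycleCoeff, mul_assoc]

end EdgeVariables

section QSModel

variable {R : Type*} [CommRing R] {n : ℕ}

/-- The QS_t coordinate `x * (1 + a - t * b)` of a directed edge with edge parameter `x`, tail
parameter `a` and head parameter `b`. -/
def qsCoord (t x a b : R) : R := x * (1 + a - t * b)

lemma map_qsCoord {S : Type*} [CommRing S] (φ : R →+* S) (t x a b : R) :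
    φ (qsCoord t x a b) = qsCoord (φ t) (φ x) (φ a) (φ b) := by
  simp [qsCoord]

lemma mul_qsCoord_add_qsCoord_swap (t x a b : R) :
    t * qsCoord t x a b + qsCoord t x b a = x * (1 + t + b * (1 - t ^ 2)) := by
  unfold qsCoord
  ring

lemma pow_sub_one_mul_edgeCyclePoly_qsCoord (t : R) (x a : Fin n → R) (σ : Equiv.Perm (Fin n)) :
    (t ^ exponentStep n - 1) * edgeCyclePoly t (fun k => qsCoord t (x k) (a k) (a (σ k)))
      (fun k => qsCoord t (x k) (a (σ k)) (a k)) = 0 := by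
  have hperm := Equiv.prod_comp σ fun k => 1 + t + a k * (1 - t ^ 2)
  rw [pow_sub_one_mul_edgeCyclePoly, sub_eq_zero]
  simp only [add_comm (qsCoord _ _ _ _) (t * _), mul_qsCoord_add_qsCoord_swap, prod_mul_distrib,
    hperm]

theorem edgeCyclePoly_qsCoord_eq_zero (t : R) (x a : Fin n → R) (σ : Equiv.Perm (Fin n)) :
    edgeCyclePoly t (fun k => qsCoord t (x k) (a k) (a (σ k)))
      (fun k => qsCoord t (x k) (a (σ k)) (a k)) = 0 := by
  have hmonic : (X ^ exponentStep n - 1 : R[X]).Monic := by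
    simpa using monic_X_pow_sub_C (1 : R) (exponentStep_ne_zero n)
  have hgeneric := hmonic.mul_right_eq_zero_iff.mp
    (pow_sub_one_mul_edgeCyclePoly_qsCoord X (C ∘ x) (C ∘ a) σ)
  have hspecialized := congrArg (evalRingHom t) hgeneric
  simp only [map_edgeCyclePoly, Function.comp_def, map_qsCoord, map_zero] at hspecialized
  simpa using hspecialized

lemma cycSucc_injective : Function.Injective (cycSucc : Fin n → Fin n) := fun i j hij =>
  Fin.ext (Nat.ModEq.eq_of_lt_of_lt
    (Nat.ModEq.add_right_cancel' 1 (congrArg Fin.val hij)) i.isLt j.isLt)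

/-- The cyclic successor as a permutation of the positions on the cycle. -/
noncomputable def cycSuccPerm (n : ℕ) : Equiv.Perm (Fin n) :=
  Equiv.ofBijective cycSucc (Finite.injective_iff_bijective.mp cycSucc_injective)

theorem cyclePoly_vanishes_on_qs_t_general {V : Type*} (v : Fin n → V) (t : R) (x : V → V → R)
    (hsymm : ∀ i j, x i j = x j i) (a : V → R) :
    cyclePoly t n v (fun i j => x i j * (1 + a i - t * a j)) = 0 := by
  have hedge := edgeCyclePoly_qsCoord_eq_zero t (fun k => x (v k) (v (cycSucc k))) (a ∘ v)
    (cycSuccPerm n)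
  simpa only [cyclePoly, hsymm (v (cycSucc _)), edgeCyclePoly, qsCoord, cycSuccPerm,
    Equiv.ofBijective_apply, Function.comp_apply] using hedge

end QSModel

/-- Substituting the QS_t parametrization
`p_{ij} = x_{ij}(1 + a_i − t·a_j)` (with `x` symmetric) into the cycle
polynomial `P^C` of any `n`-cycle (n ≥ 3) yields zero identically; this is
stated over an arbitrary commutative ring, i.e. as a polynomial identity. -/
theorem cyclePoly_vanishes_on_qs_t (R : Type*) [CommRing R] (V : Type*)
    (n : ℕ) (hn : 3 ≤ n) (v : Fin n → V) (hv : Function.Injective v)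
    (t : R) (x : V → V → R) (hsymm : ∀ i j, x i j = x j i) (a : V → R) :
    cyclePoly t n v (fun i j => x i j * (1 + a i - t * a j)) = 0 :=
  cyclePoly_vanishes_on_qs_t_general v t x hsymm a
end

section
/- (Theorem: implicit equations of the QS_t model.) Let G be a finite undirected simple graph on vertex set {1,…,I}, and let K = ℚ(t) be the field of rational functions in the variable t. Consider the K-algebra homomorphism φ from the polynomial ring K[p_{ij}, p_{ji} : {i,j} ∈ E(G)] to the polynomial ring K[x_e (e ∈ E(G)), a_1,…,a_I] sending p_{ij} ↦ x_{{i,j}}·(1 + a_i − t·a_j) for each directed edge (i,j). Then the kernel of φ is generated, as an ideal, by the cycle polynomials P^C, where C runs over all cycles of G (sequences of distinct vertices v_1,…,v_n, n ≥ 3, with {v_k,v_{k+1}} ∈ E(G) for k < n and {v_n,v_1} ∈ E(G)). -/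
/-!
After the invertible substitution `p_ij ↦ p_ij + t p_ji` the parametrization becomes
`p_ij ↦ x_ij (1 + t) (1 + (1 - t) a_i)`, which up to an affine change of the coordinates `x, a` is
the monomial map `p_ij ↦ x_ij b_i`. The kernel of the latter is generated by the cycle binomials
`∏ p_{v_k v_{k+1}} - ∏ p_{v_{k+1} v_k}`: two monomials with the same image differ by an integral
circulation on the directed edges of `G`, and a nonzero circulation contains a directed cycle along
which one can reduce. Finally, the substitution carries each cycle binomial to `1 - t ^ 2` or
`1 - t` times the cycle polynomial.
-/

section CyclePolynomials

variable {R : Type*} [CommRing R]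

/-- The factor, depending on the parity of `n`, that turns the geometric sums in the coefficients of
a cycle polynomial of length `n` into differences of two powers of `t`. -/
def parityFactor (t : R) (n : ℕ) : R :=
  if n % 2 = 0 then 1 - t ^ 2 else 1 - t

lemma isUnit_one_add_and_one_sub {t : R} (ht : IsUnit (1 - t ^ 2)) :
    IsUnit (1 + t) ∧ IsUnit (1 - t) := by
  rwa [← IsUnit.mul_iff, show (1 + t) * (1 - t) = 1 - t ^ 2 by ring]

lemma isUnit_parityFactor {t : R} (ht : IsUnit (1 - t ^ 2)) (n : ℕ) :
    IsUnit (parityFactor t n) := by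
  unfold parityFactor
  split_ifs
  exacts [ht, (isUnit_one_add_and_one_sub ht).2]

lemma parityFactor_add_mul_sum_pow (t : R) {a b : ℕ} (hab : a ≤ b) :
    parityFactor t (a + b) *
        (if (a + b) % 2 = 0 then ∑ m ∈ Finset.range ((b - a) / 2), t ^ (a + 2 * m)
          else ∑ m ∈ Finset.range (b - a), t ^ (a + m)) =
      t ^ a - t ^ b := by
  unfold parityFactor
  split_ifs with heven
  · have hb : t ^ b = t ^ a * (t ^ 2) ^ ((b - a) / 2) := by
      rw [← pow_mul, ← pow_add]
      congr 1
      lia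
    simp only [pow_add, pow_mul, ← Finset.mul_sum]
    linear_combination t ^ a * mul_neg_geom_sum (t ^ 2) ((b - a) / 2) + hb
  · have hb : t ^ b = t ^ a * t ^ (b - a) := by rw [← pow_add, Nat.add_sub_cancel' hab]
    simp only [pow_add, ← Finset.mul_sum]
    linear_combination t ^ a * mul_neg_geom_sum t (b - a) + hb

lemma parityFactor_mul_cycleCoeff (t : R) {n : ℕ} (δ : Fin n → Bool) :
    parityFactor t n * cycleCoeff t δ =
      t ^ (Finset.univ.filter fun k => ¬δ k = true).card -
        t ^ (Finset.univ.filter fun k => δ k = true).card := by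
  have hcard := Finset.card_filter_add_card_filter_not (s := Finset.univ) fun k => δ k = true
  rw [Finset.card_univ, Fintype.card_fin] at hcard
  unfold cycleCoeff
  generalize (Finset.univ.filter fun k => δ k = true).card = m at hcard ⊢
  generalize (Finset.univ.filter fun k => ¬δ k = true).card = m' at hcard ⊢
  subst hcard
  dsimp only
  rcases lt_trichotomy m m' with hlt | rfl | hgt
  · have hc : (2 * (m : ℤ) - (m + m' : ℕ)).natAbs = m' - m := by lia
    have hexp : (m + m' - (m' - m)) / 2 = m := by lia
    rw [if_neg (by lia), if_neg (by lia), hc, hexp]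
    linear_combination -parityFactor_add_mul_sum_pow t hlt.le
  · rw [if_pos (by lia), mul_zero, sub_self]
  · have hc : (2 * (m : ℤ) - (m + m' : ℕ)).natAbs = m - m' := by lia
    have hexp : (m + m' - (m - m')) / 2 = m' := by lia
    rw [if_neg (by lia), if_pos (by lia), hc, hexp, one_mul, add_comm m m']
    exact parityFactor_add_mul_sum_pow t hgt.le

lemma prod_add_eq_sum_bool {S ι : Type*} [CommSemiring S] [Fintype ι] [DecidableEq ι]
    (f g : ι → S) :
    ∏ k, (f k + g k) = ∑ δ : ι → Bool, ∏ k, if δ k then f k else g k := by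
  simpa using Fintype.prod_sum fun k (b : Bool) => if b then f k else g k

lemma prod_ite_mul_left_s9 {S ι : Type*} [CommMonoid S] [Fintype ι] (q : ι → Prop) [DecidablePred q]
    (t : S) (f : ι → S) :
    ∏ k, (if q k then t * f k else f k) = t ^ (Finset.univ.filter q).card * ∏ k, f k := by
  simp only [← Finset.prod_const, Finset.prod_filter, ← Finset.prod_mul_distrib, ite_mul, one_mul]

theorem parityFactor_mul_cyclePoly {V : Type*} (t : R) (n : ℕ) (v : Fin n → V) (p : V → V → R) :
    parityFactor t n * cyclePoly t n v p =
      ∏ k, (p (v k) (v (cycSucc k)) + t * p (v (cycSucc k)) (v k)) -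
        ∏ k, (p (v (cycSucc k)) (v k) + t * p (v k) (v (cycSucc k))) := by
  simp only [add_comm (p (v (cycSucc _)) (v _))]
  rw [prod_add_eq_sum_bool, prod_add_eq_sum_bool, ← Finset.sum_sub_distrib, cyclePoly,
    Finset.mul_sum]
  refine Finset.sum_congr rfl fun δ _ => ?_
  rw [← mul_assoc, parityFactor_mul_cycleCoeff, sub_mul, ← prod_ite_mul_left_s9,
    ← prod_ite_mul_left_s9]
  congr! 2 with k _ k _ <;> cases δ k <;> rfl

end CyclePolynomials

section Cycles

lemma cycSucc_bijective (n : ℕ) : Function.Bijective (cycSucc : Fin n → Fin n) := by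
  cases n with
  | zero => exact ⟨fun k => k.elim0, fun k => k.elim0⟩
  | succ n =>
    have hsucc : (cycSucc : Fin (n + 1) → Fin (n + 1)) = Equiv.addRight 1 := by
      ext k
      simp [cycSucc, Fin.val_add]
    rw [hsucc]
    exact Equiv.bijective _

lemma periodicPts_nonempty {α : Type*} [Finite α] [Nonempty α] (f : α → α) :
    (Function.periodicPts f).Nonempty := by
  obtain ⟨x⟩ := ‹Nonempty α›
  obtain ⟨m, n, hlt, heq⟩ := (Set.finite_univ (α := α)).exists_lt_map_eq_of_forall_mem
    (f := fun k : ℕ => f^[k] x) fun _ => Set.mem_univ _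
  refine ⟨f^[m] x, Function.mk_mem_periodicPts (Nat.sub_pos_of_lt hlt) ?_⟩
  rw [Function.IsPeriodicPt, Function.IsFixedPt, ← Function.iterate_add_apply,
    Nat.sub_add_cancel hlt.le]
  exact heq.symm

lemma three_le_minimalPeriod_of_asymm {α : Type*} {r : α → α → Prop}
    (hasymm : ∀ x y, r x y → ¬r y x) {f : α → α} (hf : ∀ x, r x (f x)) {x : α}
    (hx : x ∈ Function.periodicPts f) : 3 ≤ Function.minimalPeriod f x := by
  have hper := Function.iterate_minimalPeriod (f := f) (x := x)
  have hpos := Function.minimalPeriod_pos_of_mem_periodicPts hx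
  by_contra! hlt
  interval_cases Function.minimalPeriod f x
  · have hxx : r x x := by simpa [show f x = x from hper] using hf x
    exact hasymm x x hxx hxx
  · have hback : r (f x) x := by simpa [show f (f x) = x from hper] using hf (f x)
    exact hasymm x (f x) (hf x) hback

theorem exists_injective_cycle_of_asymm {V : Type*} {r : V → V → Prop}
    (hasymm : ∀ i j, r i j → ¬r j i) (hfin : {j | ∃ i, r i j}.Finite)
    (hnext : ∀ i j, r i j → ∃ k, r j k) {i₀ j₀ : V} (h₀ : r i₀ j₀) :
    ∃ (n : ℕ) (_ : 3 ≤ n) (v : Fin n → V), Function.Injective v ∧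
      ∀ k, r (v k) (v (cycSucc k)) := by
  let S := {j | ∃ i, r i j}
  have : Finite S := hfin
  have : Nonempty S := ⟨⟨j₀, i₀, h₀⟩⟩
  have hstep (j : S) : ∃ k : S, r j k := by
    obtain ⟨j, i, hij⟩ := j
    obtain ⟨k, hjk⟩ := hnext i j hij
    exact ⟨⟨k, j, hjk⟩, hjk⟩
  choose f hf using hstep
  obtain ⟨x, hx⟩ := periodicPts_nonempty f
  refine ⟨Function.minimalPeriod f x, three_le_minimalPeriod_of_asymm
    (r := fun i j : S => r i j) (fun i j => hasymm i j) hf hx, fun k => f^[k] x, ?_, fun k => ?_⟩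
  · intro k l hkl
    exact Fin.ext (Function.iterate_injOn_Iio_minimalPeriod k.2 l.2 (Subtype.ext hkl))
  · have hsucc : f^[cycSucc k] x = f (f^[k] x) := by
      rw [cycSucc, Function.iterate_mod_minimalPeriod_eq, Function.iterate_succ_apply']
    simpa only [hsucc] using hf (f^[k] x)

end Cycles

section Exponents

lemma exists_lt_of_mapDomain_apply_eq {α β M : Type*} [AddCommMonoid M] [LinearOrder M]
    [IsOrderedCancelAddMonoid M] {f : α → β} {u u' : α →₀ M} {a : α}
    (heq : u.mapDomain f (f a) = u'.mapDomain f (f a)) (hlt : u a < u' a) :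
    ∃ a', f a' = f a ∧ u' a' < u a' := by
  classical
  by_contra! hle
  let s := {a' ∈ u.support ∪ u'.support | f a' = f a}
  have hsum (w : α →₀ M) (hw : w.support ⊆ u.support ∪ u'.support) :
      w.mapDomain f (f a) = ∑ a' ∈ s, w a' := by
    rw [Finsupp.mapDomain_apply_eq_sum]
    refine Finset.sum_subset (Finset.filter_subset_filter _ hw) fun a' ha' hna' => ?_
    simp_all [s]
  have ha : a ∈ s := by
    have : u a ≠ 0 ∨ u' a ≠ 0 := by
      by_contra! h
      exact hlt.ne (h.1.trans h.2.symm)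
    simpa [s] using this
  refine (Finset.sum_lt_sum (fun a' ha' => hle a' (Finset.mem_filter.1 ha').2)
    ⟨a, ha, hlt⟩).ne ?_
  rw [← hsum u Finset.subset_union_left, ← hsum u' Finset.subset_union_right, heq]

lemma sum_single_one_le {α ι : Type*} [Fintype ι] {g : ι → α} (hg : Function.Injective g)
    {u : α →₀ ℕ} (hu : ∀ k, 0 < u (g k)) : ∑ k, Finsupp.single (g k) 1 ≤ u := by
  classical
  intro a
  simp only [Finsupp.finsetSum_apply, Finsupp.single_apply]
  by_cases ha : ∃ k, g k = a
  · obtain ⟨k, rfl⟩ := ha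
    simpa [hg.eq_iff, Nat.one_le_iff_ne_zero, Nat.pos_iff_ne_zero] using hu k
  · simp [not_exists.1 ha]

end Exponents

section MonomialMaps

open MvPolynomial

lemma prod_X_eq_monomial {R σ ι : Type*} [CommSemiring R] [Fintype ι] (g : ι → σ) :
    ∏ k, (X (g k) : MvPolynomial σ R) = monomial (∑ k, Finsupp.single (g k) 1) 1 :=
  (monomial_sum_one _ _).symm

lemma aeval_monomial_one_monomial {R σ τ : Type*} [CommSemiring R] (A : σ → τ →₀ ℕ) (u : σ →₀ ℕ)
    (r : R) :
    aeval (fun s => monomial (A s) (1 : R)) (monomial u r) =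
      monomial (Finsupp.linearCombination ℕ A u) r := by
  rw [aeval_monomial, algebraMap_eq, Finsupp.linearCombination_apply, monomial_finsupp_sum_index]
  simp only [monomial_pow, one_pow]

variable {R σ τ : Type*} [CommRing R]

/-- The ideal spanned by the differences of two monomials that have the same multidegree when the
variable `s` is given the degree `A s`: the toric ideal of the configuration `A`. -/
noncomputable def binomialIdeal (R : Type*) [CommRing R] (A : σ → τ →₀ ℕ) :
    Ideal (MvPolynomial σ R) :=
  Ideal.span {p | ∃ u u', Finsupp.linearCombination ℕ A u = Finsupp.linearCombination ℕ A u' ∧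
    p = monomial u 1 - monomial u' 1}

lemma ker_aeval_monomial_one_le_binomialIdeal (A : σ → τ →₀ ℕ) :
    RingHom.ker (aeval (R := R) fun s => monomial (A s) (1 : R)) ≤ binomialIdeal R A := by
  -- Choosing one preimage of each monomial gives a linear section of the map modulo binomials.
  let preimage : (τ →₀ ℕ) → σ →₀ ℕ := Function.invFun (Finsupp.linearCombination ℕ A)
  let lift : MvPolynomial τ R →ₗ[R] MvPolynomial σ R :=
    (basisMonomials τ R).constr R fun d => monomial (preimage d) 1
  have lift_monomial (d : τ →₀ ℕ) : lift (monomial d 1) = monomial (preimage d) 1 := by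
    simpa using (basisMonomials τ R).constr_basis R (fun d => monomial (preimage d) (1 : R)) d
  have sub_lift_mem (f : MvPolynomial σ R) :
      f - lift (aeval (fun s => monomial (A s) (1 : R)) f) ∈ binomialIdeal R A := by
    induction f using MvPolynomial.induction_on' with
    | monomial u r =>
      have hr : monomial u r = r • monomial u (1 : R) := by
        rw [smul_monomial, smul_eq_mul, mul_one]
      rw [hr, map_smul, map_smul, aeval_monomial_one_monomial, lift_monomial, ← smul_sub,
        smul_eq_C_mul]
      exact Ideal.mul_mem_left _ _
        (Ideal.subset_span ⟨_, _, Function.apply_invFun_apply.symm, rfl⟩)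
    | add f g hf hg =>
      rw [map_add, map_add, add_sub_add_comm]
      exact Ideal.add_mem _ hf hg
  intro f hf
  have hmem := sub_lift_mem f
  rwa [RingHom.mem_ker.1 hf, map_zero, sub_zero] at hmem

theorem ker_aeval_monomial_one (A : σ → τ →₀ ℕ) :
    RingHom.ker (aeval (R := R) fun s => monomial (A s) (1 : R)) = binomialIdeal R A := by
  refine le_antisymm (ker_aeval_monomial_one_le_binomialIdeal A) (Ideal.span_le.2 ?_)
  rintro _ ⟨u, u', huu', rfl⟩
  rw [SetLike.mem_coe, RingHom.mem_ker, map_sub, aeval_monomial_one_monomial,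
    aeval_monomial_one_monomial, huu', sub_self]

lemma aeval_C_mul_X_add_C_injective {a : σ → R} (ha : ∀ s, IsUnit (a s)) (b : σ → R) :
    Function.Injective (aeval (R := R) fun s => C (a s) * X s + C (b s)) := by
  choose a' ha' using fun s => (ha s).exists_left_inv
  let inverse : MvPolynomial σ R →ₐ[R] MvPolynomial σ R :=
    aeval fun s => C (a' s) * (X s - C (b s))
  refine Function.LeftInverse.injective (g := inverse) fun f => ?_
  have hcomp : inverse.comp (aeval fun s => C (a s) * X s + C (b s)) = AlgHom.id R _ := by
    ext1 s
    have hC : (C (a' s) * C (a s) : MvPolynomial σ R) = 1 := by rw [← C_mul, ha', C_1]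
    simp only [AlgHom.comp_apply, aeval_X, map_add, map_mul, algHom_C, algebraMap_eq, inverse,
      AlgHom.id_apply]
    linear_combination (X s - C (b s)) * hC
  exact DFunLike.congr_fun hcomp f

end MonomialMaps

lemma span_range_isUnit_mul {A ι : Type*} [CommSemiring A] {u : ι → A} (hu : ∀ i, IsUnit (u i))
    (f : ι → A) :
    Ideal.span (Set.range fun i => u i * f i) = Ideal.span (Set.range f) := by
  refine le_antisymm (Ideal.span_le.2 ?_) (Ideal.span_le.2 ?_) <;> rintro _ ⟨i, rfl⟩
  · exact Ideal.mul_mem_left _ _ (Ideal.subset_span ⟨i, rfl⟩)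
  · exact (Ideal.unit_mul_mem_iff_mem _ (hu i)).1 (Ideal.subset_span ⟨i, rfl⟩)

section QuasisymmetryModel

open MvPolynomial

variable {V : Type*} {G : SimpleGraph V}

/-- The directed edges of `G`, which index the variables `p_ij` of the model. -/
abbrev DirectedEdge (G : SimpleGraph V) : Type _ := {e : V × V // G.Adj e.1 e.2}

namespace DirectedEdge

/-- The vertex `i` at which the directed edge `i → j` starts. -/
def source (e : DirectedEdge G) : V := e.1.1

/-- The undirected edge `{i, j}` underlying the directed edge `i → j`. -/
def toSym2 (e : DirectedEdge G) : Sym2 V := s(e.1.1, e.1.2)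

/-- The directed edge `j → i` opposite to `i → j`. -/
def reverse (e : DirectedEdge G) : DirectedEdge G := ⟨(e.1.2, e.1.1), e.2.symm⟩

lemma reverse_reverse (e : DirectedEdge G) : e.reverse.reverse = e := rfl

lemma toSym2_reverse (e : DirectedEdge G) : e.reverse.toSym2 = e.toSym2 := Sym2.eq_swap

lemma eq_or_eq_reverse_of_toSym2_eq {e e' : DirectedEdge G} (h : e'.toSym2 = e.toSym2) :
    e' = e ∨ e' = e.reverse := by
  rcases Sym2.eq_iff.1 h with ⟨h₁, h₂⟩ | ⟨h₁, h₂⟩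
  · exact Or.inl (Subtype.ext (Prod.ext h₁ h₂))
  · exact Or.inr (Subtype.ext (Prod.ext h₁ h₂))

/-- The exponent vector of the monomial `x_ij b_i` attached to `i → j` by the toric
parametrization. -/
noncomputable def toricExponent (e : DirectedEdge G) : Sym2 V ⊕ V →₀ ℕ :=
  Finsupp.single (Sum.inl e.toSym2) 1 + Finsupp.single (Sum.inr e.source) 1

lemma linearCombination_toricExponent (u : DirectedEdge G →₀ ℕ) :
    Finsupp.linearCombination ℕ toricExponent u =
      (u.mapDomain toSym2).sumElim (u.mapDomain source) := by
  induction u using Finsupp.induction_linear with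
  | zero => simp
  | add u u' hu hu' =>
    simp only [map_add, hu, hu', Finsupp.mapDomain_add, Finsupp.sumElim_add]
  | single e m => simp [toricExponent]

lemma linearCombination_toricExponent_eq_iff {u u' : DirectedEdge G →₀ ℕ} :
    Finsupp.linearCombination ℕ toricExponent u = Finsupp.linearCombination ℕ toricExponent u' ↔
      u.mapDomain toSym2 = u'.mapDomain toSym2 ∧ u.mapDomain source = u'.mapDomain source := by
  simp only [linearCombination_toricExponent, DFunLike.ext_iff, Sum.forall, Finsupp.sumElim_inl,
    Finsupp.sumElim_inr]

lemma lt_reverse_of_mapDomain_toSym2_eq {u u' : DirectedEdge G →₀ ℕ}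
    (h : u.mapDomain toSym2 = u'.mapDomain toSym2) {e : DirectedEdge G} (he : u' e < u e) :
    u e.reverse < u' e.reverse := by
  obtain ⟨e', hedge, hlt⟩ := exists_lt_of_mapDomain_apply_eq (DFunLike.congr_fun h.symm e.toSym2) he
  rcases eq_or_eq_reverse_of_toSym2_eq hedge with rfl | rfl
  · exact absurd hlt he.asymm
  · exact hlt

end DirectedEdge

open DirectedEdge

/-- A directed cycle `v_0 → v_1 → ⋯ → v_{n-1} → v_0` of `G` with distinct vertices and `n ≥ 3`; the
indices are cyclic through `cycSucc`. -/
structure DirectedCycle (G : SimpleGraph V) where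
  length : ℕ
  three_le_length : 3 ≤ length
  vertex : Fin length → V
  vertex_injective : Function.Injective vertex
  adj : ∀ k, G.Adj (vertex k) (vertex (cycSucc k))

namespace DirectedCycle

variable (c : DirectedCycle G)

/-- The `k`-th directed edge of a cycle, from `v_k` to `v_{k+1}`. -/
def edge (k : Fin c.length) : DirectedEdge G := ⟨(c.vertex k, c.vertex (cycSucc k)), c.adj k⟩

lemma edge_injective : Function.Injective c.edge := fun _ _ h =>
  c.vertex_injective (congrArg source h)

lemma edge_reverse_injective : Function.Injective fun k => (c.edge k).reverse := fun _ _ h =>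
  c.edge_injective (congrArg reverse h)

/-- The exponent vector of the product of the edge variables along a cycle. -/
noncomputable def forwardExponent : DirectedEdge G →₀ ℕ :=
  ∑ k, Finsupp.single (c.edge k) 1

/-- The exponent vector of the product of the edge variables along the reverse of a cycle. -/
noncomputable def backwardExponent : DirectedEdge G →₀ ℕ :=
  ∑ k, Finsupp.single (c.edge k).reverse 1

lemma degree_forwardExponent : c.forwardExponent.degree = c.length := by
  simp [forwardExponent]

lemma linearCombination_toricExponent_forwardExponent :
    Finsupp.linearCombination ℕ toricExponent c.forwardExponent =
      Finsupp.linearCombination ℕ toricExponent c.backwardExponent := by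
  have hsource : ∑ k, Finsupp.single (Sum.inr (c.vertex (cycSucc k))) 1 =
      ∑ k, (Finsupp.single (Sum.inr (c.vertex k)) 1 : Sym2 V ⊕ V →₀ ℕ) :=
    (cycSucc_bijective c.length).sum_comp fun k => Finsupp.single (Sum.inr (c.vertex k)) 1
  simp only [forwardExponent, backwardExponent, map_sum, Finsupp.linearCombination_single,
    one_smul, toricExponent, Finset.sum_add_distrib, toSym2_reverse]
  exact congrArg _ hsource.symm

theorem exists_forwardExponent_le_and_backwardExponent_le {u u' : DirectedEdge G →₀ ℕ}
    (hedge : u.mapDomain toSym2 = u'.mapDomain toSym2)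
    (hsource : u.mapDomain source = u'.mapDomain source) (hne : u ≠ u') :
    ∃ c : DirectedCycle G, c.forwardExponent ≤ u ∧ c.backwardExponent ≤ u' := by
  let r (i j : V) : Prop := ∃ h : G.Adj i j, u' ⟨(i, j), h⟩ < u ⟨(i, j), h⟩
  have hrev {i j : V} (h : G.Adj i j) (hlt : u' ⟨(i, j), h⟩ < u ⟨(i, j), h⟩) :
      u ⟨(j, i), h.symm⟩ < u' ⟨(j, i), h.symm⟩ :=
    lt_reverse_of_mapDomain_toSym2_eq hedge hlt
  have hasymm (i j : V) : r i j → ¬r j i := fun ⟨h, hlt⟩ ⟨_, hlt'⟩ => (hrev h hlt).asymm hlt'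
  have hfin : {j | ∃ i, r i j}.Finite := by
    refine (u.support.finite_toSet.image fun e => e.1.2).subset ?_
    rintro j ⟨i, h, hlt⟩
    exact ⟨⟨(i, j), h⟩, by simpa using hlt.ne_bot, rfl⟩
  have hnext (i j : V) : r i j → ∃ k, r j k := by
    rintro ⟨h, hlt⟩
    obtain ⟨⟨⟨_, k⟩, hjk⟩, rfl, hlt'⟩ :=
      exists_lt_of_mapDomain_apply_eq (DFunLike.congr_fun hsource j) (hrev h hlt)
    exact ⟨k, hjk, hlt'⟩
  obtain ⟨i, j, hij⟩ : ∃ i j, r i j := by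
    obtain ⟨e, he⟩ := Finsupp.ne_iff.1 hne
    rcases he.lt_or_gt with hlt | hgt
    · exact ⟨_, _, e.reverse.2, lt_reverse_of_mapDomain_toSym2_eq hedge.symm hlt⟩
    · exact ⟨_, _, e.2, hgt⟩
  obtain ⟨n, hn, v, hv, hcycle⟩ := exists_injective_cycle_of_asymm hasymm hfin hnext hij
  choose hadj hlt using hcycle
  let c : DirectedCycle G := ⟨n, hn, v, hv, hadj⟩
  exact ⟨c, sum_single_one_le c.edge_injective fun k => (hlt k).pos,
    sum_single_one_le c.edge_reverse_injective fun k => (hrev _ (hlt k)).pos⟩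

/-- The binomial `∏ p_{v_k v_{k+1}} - ∏ p_{v_{k+1} v_k}` of a cycle. -/
noncomputable def binomial (R : Type*) [CommRing R] (c : DirectedCycle G) :
    MvPolynomial (DirectedEdge G) R :=
  ∏ k, X (c.edge k) - ∏ k, X (c.edge k).reverse

variable {R : Type*} [CommRing R]

lemma binomial_eq_monomial_sub_monomial :
    c.binomial R = monomial c.forwardExponent 1 - monomial c.backwardExponent 1 := by
  rw [binomial, prod_X_eq_monomial, prod_X_eq_monomial, forwardExponent, backwardExponent]

/-- The cycle polynomial of a cycle of `G`, in the variables `p_ij` of the model. -/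
noncomputable def poly [DecidableRel G.Adj] (t : R) (c : DirectedCycle G) :
    MvPolynomial (DirectedEdge G) R :=
  cyclePoly (C t) c.length c.vertex fun i j => if h : G.Adj i j then X ⟨(i, j), h⟩ else 0

lemma range_poly [DecidableRel G.Adj] (t : R) :
    Set.range (poly (G := G) t) =
      {P | ∃ (n : ℕ) (_ : 3 ≤ n) (v : Fin n → V), Function.Injective v ∧
        (∀ k, G.Adj (v k) (v (cycSucc k))) ∧
        P = cyclePoly (C t) n v fun i j => if h : G.Adj i j then X ⟨(i, j), h⟩ else 0} := by
  ext P
  constructor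
  · rintro ⟨c, rfl⟩
    exact ⟨c.length, c.three_le_length, c.vertex, c.vertex_injective, c.adj, rfl⟩
  · rintro ⟨n, hn, v, hv, hadj, rfl⟩
    exact ⟨⟨n, hn, v, hv, hadj⟩, rfl⟩

lemma parityFactor_mul_poly [DecidableRel G.Adj] (t : R) :
    parityFactor (C t) c.length * c.poly t =
      ∏ k, (X (c.edge k) + C t * X (c.edge k).reverse) -
        ∏ k, (X (c.edge k).reverse + C t * X (c.edge k)) := by
  simp only [poly, parityFactor_mul_cyclePoly, c.adj, (c.adj _).symm, dite_true, edge,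
    reverse]

end DirectedCycle

variable {R : Type*} [CommRing R]

/-- The toric parametrization `p_ij ↦ x_ij b_i`. -/
noncomputable def toricHom (R : Type*) [CommRing R] (G : SimpleGraph V) :
    MvPolynomial (DirectedEdge G) R →ₐ[R] MvPolynomial (Sym2 V ⊕ V) R :=
  aeval fun e => monomial e.toricExponent 1

lemma monomial_sub_monomial_mem_span_binomial (u u' : DirectedEdge G →₀ ℕ)
    (huu' : Finsupp.linearCombination ℕ toricExponent u =
      Finsupp.linearCombination ℕ toricExponent u') :
    monomial u 1 - monomial u' 1 ∈
      Ideal.span (Set.range (DirectedCycle.binomial (G := G) R)) := by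
  induction hd : u.degree using Nat.strong_induction_on generalizing u u' with
  | _ d ih =>
  subst hd
  by_cases hne : u = u'
  · simp [hne]
  obtain ⟨hedge, hsource⟩ := linearCombination_toricExponent_eq_iff.1 huu'
  obtain ⟨c, hle, hle'⟩ :=
    DirectedCycle.exists_forwardExponent_le_and_backwardExponent_le hedge hsource hne
  obtain ⟨r, rfl⟩ := exists_add_of_le hle
  obtain ⟨r', rfl⟩ := exists_add_of_le hle'
  have hrr' : Finsupp.linearCombination ℕ toricExponent r =
      Finsupp.linearCombination ℕ toricExponent r' := by
    rw [map_add, map_add, c.linearCombination_toricExponent_forwardExponent] at huu'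
    exact add_left_cancel huu'
  have hdeg : r.degree < (c.forwardExponent + r).degree := by
    have := c.three_le_length
    rw [map_add, c.degree_forwardExponent]
    lia
  have hsplit : (monomial (c.forwardExponent + r) 1 - monomial (c.backwardExponent + r') 1 :
        MvPolynomial (DirectedEdge G) R) =
      monomial r 1 * c.binomial R +
        monomial c.backwardExponent 1 * (monomial r 1 - monomial r' 1) := by
    simp only [c.binomial_eq_monomial_sub_monomial, mul_sub, monomial_mul, mul_one, add_comm r]
    ring
  rw [hsplit]
  exact Ideal.add_mem _ (Ideal.mul_mem_left _ _ (Ideal.subset_span ⟨c, rfl⟩))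
    (Ideal.mul_mem_left _ _ (ih _ hdeg r r' hrr' rfl))

theorem ker_toricHom :
    RingHom.ker (toricHom R G) = Ideal.span (Set.range (DirectedCycle.binomial (G := G) R)) := by
  refine (ker_aeval_monomial_one _).trans (le_antisymm (Ideal.span_le.2 ?_) (Ideal.span_mono ?_))
  · rintro _ ⟨u, u', huu', rfl⟩
    exact monomial_sub_monomial_mem_span_binomial u u' huu'
  · rintro _ ⟨c, rfl⟩
    exact ⟨_, _, c.linearCombination_toricExponent_forwardExponent,
      c.binomial_eq_monomial_sub_monomial⟩

/-- The parametrization `p_ij ↦ x_ij (1 + a_i - t a_j)` of the quasisymmetry model `QS_t`. -/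
noncomputable def qsHom (G : SimpleGraph V) (t : R) :
    MvPolynomial (DirectedEdge G) R →ₐ[R] MvPolynomial (Sym2 V ⊕ V) R :=
  aeval fun e => X (Sum.inl s(e.1.1, e.1.2)) *
    (1 + X (Sum.inr e.1.1) - C t * X (Sum.inr e.1.2))

/-- The substitution `p_ij ↦ p_ij + t p_ji`, which cancels `a_j` from the parametrization of the
model. -/
noncomputable def addReverseHom (G : SimpleGraph V) (t : R) :
    MvPolynomial (DirectedEdge G) R →ₐ[R] MvPolynomial (DirectedEdge G) R :=
  aeval fun e => X e + C t * X e.reverse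

lemma addReverseHom_X (t : R) (e : DirectedEdge G) :
    addReverseHom G t (X e) = X e + C t * X e.reverse :=
  aeval_X _ _

lemma addReverseHom_surjective {t : R} (ht : IsUnit (1 - t ^ 2)) :
    Function.Surjective (addReverseHom G t) := by
  obtain ⟨s, hs⟩ := ht.exists_left_inv
  have hC : (C s * (1 - C t ^ 2) : MvPolynomial (DirectedEdge G) R) = 1 := by
    simpa using congrArg C hs
  rw [← AlgHom.range_eq_top, eq_top_iff, ← adjoin_range_X, Algebra.adjoin_le_iff]
  rintro _ ⟨e, rfl⟩
  refine (AlgHom.mem_range _).2 ⟨C s * (X e - C t * X e.reverse), ?_⟩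
  simp only [map_mul, map_sub, addReverseHom_X, algHom_C, algebraMap_eq,
    reverse_reverse]
  linear_combination X e * hC

/-- The affine substitution `x_e ↦ (1 + t) x_e`, `b_i ↦ 1 + (1 - t) a_i` relating the coordinates of
the toric parametrization to those of the model. -/
noncomputable def affineHom (V : Type*) (t : R) :
    MvPolynomial (Sym2 V ⊕ V) R →ₐ[R] MvPolynomial (Sym2 V ⊕ V) R :=
  aeval fun s => C (Sum.elim (fun _ => 1 + t) (fun _ => 1 - t) s) * X s +
    C (Sum.elim (fun _ => 0) (fun _ => 1) s)

lemma affineHom_injective {t : R} (ht : IsUnit (1 - t ^ 2)) :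
    Function.Injective (affineHom V t) :=
  have ⟨hadd, hsub⟩ := isUnit_one_add_and_one_sub ht
  aeval_C_mul_X_add_C_injective (Sum.forall.2 ⟨fun _ => hadd, fun _ => hsub⟩) _

lemma qsHom_comp_addReverseHom (t : R) :
    (qsHom G t).comp (addReverseHom G t) = (affineHom V t).comp (toricHom R G) := by
  ext1 e
  have htoric : (monomial e.toricExponent 1 : MvPolynomial (Sym2 V ⊕ V) R) =
      X (Sum.inl e.toSym2) * X (Sum.inr e.source) := by
    rw [toricExponent, X, X, monomial_mul, one_mul]
  have hswap : s(e.1.2, e.1.1) = s(e.1.1, e.1.2) := Sym2.eq_swap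
  simp only [AlgHom.comp_apply, addReverseHom_X, toricHom, aeval_X, htoric, map_add, map_mul,
    qsHom, affineHom, algHom_C, algebraMap_eq, reverse, source, toSym2, hswap, Sum.elim_inl,
    Sum.elim_inr, C_sub, C_0, C_1]
  ring

lemma comap_addReverseHom_ker_qsHom {t : R} (ht : IsUnit (1 - t ^ 2)) :
    (RingHom.ker (qsHom G t)).comap (addReverseHom G t) = RingHom.ker (toricHom R G) := by
  ext f
  have hcomp := DFunLike.congr_fun (qsHom_comp_addReverseHom t) f
  simp only [AlgHom.comp_apply] at hcomp
  rw [Ideal.mem_comap, RingHom.mem_ker, RingHom.mem_ker, hcomp,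
    map_eq_zero_iff _ (affineHom_injective ht)]

lemma addReverseHom_binomial [DecidableRel G.Adj] (t : R) (c : DirectedCycle G) :
    addReverseHom G t (c.binomial R) = parityFactor (C t) c.length * c.poly t := by
  simp only [DirectedCycle.binomial, c.parityFactor_mul_poly, map_sub, map_prod, addReverseHom_X,
    reverse_reverse]

theorem qs_t_ideal_generated_by_cycle_polys_general {t : R} (ht : IsUnit (1 - t ^ 2))
    (G : SimpleGraph V) [DecidableRel G.Adj] :
    RingHom.ker (qsHom G t) = Ideal.span (Set.range (DirectedCycle.poly (G := G) t)) := by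
  have hunit (c : DirectedCycle G) :
      IsUnit (parityFactor (C t : MvPolynomial (DirectedEdge G) R) c.length) :=
    isUnit_parityFactor (by simpa using ht.map C) _
  calc RingHom.ker (qsHom G t)
      = ((RingHom.ker (qsHom G t)).comap (addReverseHom G t)).map (addReverseHom G t) :=
        (Ideal.map_comap_of_surjective _ (addReverseHom_surjective ht) _).symm
    _ = (Ideal.span (Set.range (DirectedCycle.binomial R))).map (addReverseHom G t) := by
        rw [comap_addReverseHom_ker_qsHom ht, ker_toricHom]
    _ = Ideal.span (Set.range fun c : DirectedCycle G =>
          parityFactor (C t) c.length * c.poly t) := by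
        rw [Ideal.map_span, ← Set.range_comp]
        simp only [Function.comp_def, addReverseHom_binomial]
    _ = Ideal.span (Set.range (DirectedCycle.poly t)) := span_range_isUnit_mul hunit _

end QuasisymmetryModel

lemma isUnit_one_sub_ratFunc_X_sq (K : Type*) [Field K] :
    IsUnit (1 - RatFunc.X ^ 2 : RatFunc K) := by
  have hpoly : (1 - Polynomial.X ^ 2 : Polynomial K) ≠ 0 := by
    rw [← neg_ne_zero, neg_sub, ← Polynomial.C_1]
    exact Polynomial.X_pow_sub_C_ne_zero two_pos 1
  simpa using (RatFunc.algebraMap_ne_zero hpoly).isUnit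

open MvPolynomial in
/-- Theorem: implicit equations of the QS_t model: over the field
`K = ℚ(t)` of rational functions, the kernel of the ring map
`p_{ij} ↦ x_{{i,j}}·(1 + a_i − t·a_j)` (from the polynomial ring in the doubled
edge variables of a graph `G` to the polynomial ring in the edge variables `x`
and vertex variables `a`) is generated by the cycle polynomials `P^C`, where
`C` runs over all cycles of `G`. -/
theorem qs_t_ideal_generated_by_cycle_polys (I : ℕ)
    (G : SimpleGraph (Fin I)) [DecidableRel G.Adj] :
    RingHom.ker
      ((aeval (R := RatFunc ℚ)
          (fun e : {e : Fin I × Fin I // G.Adj e.1 e.2} =>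
            (X (Sum.inl s(e.1.1, e.1.2)) *
              (1 + X (Sum.inr e.1.1) - C RatFunc.X * X (Sum.inr e.1.2)) :
              MvPolynomial (Sym2 (Fin I) ⊕ Fin I) (RatFunc ℚ)))).toRingHom)
    = Ideal.span
        { P : MvPolynomial {e : Fin I × Fin I // G.Adj e.1 e.2} (RatFunc ℚ) |
          ∃ (n : ℕ) (_ : 3 ≤ n) (v : Fin n → Fin I),
            Function.Injective v ∧ (∀ k, G.Adj (v k) (v (cycSucc k))) ∧
            P = cyclePoly (C RatFunc.X) n v
                  (fun i j =>
                    if h : G.Adj i j then X ⟨(i, j), h⟩ else 0) } := by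
  rw [← DirectedCycle.range_poly]
  exact qs_t_ideal_generated_by_cycle_polys_general (isUnit_one_sub_ratFunc_X_sq ℚ) G
end

section
/- (SI = MH ∩ QSI_t.) Let I ≥ 2, t ∈ [0,1], let s_1,…,s_I be positive reals, and let a = (a_1,…,a_I) be a real vector with 2 + (1−t)(a_i + a_j) > 0 for all i,j and such that 1 + (1+t)(a_i − a_j)/(2 + (1−t)(a_i + a_j)) ≥ 0 for all i ≠ j. Define p_{ii} = s_i² and p_{ij} = s_i·s_j·(1 + (1+t)(a_i − a_j)/(2 + (1−t)(a_i + a_j))) for i ≠ j. If p satisfies marginal homogeneity, i.e. p_{i+} = p_{+i} for all i = 1,…,I, then a_1 = a_2 = … = a_I and p_{ij} = s_i·s_j for all i,j; that is, p satisfies the symmetric independence model. Conversely, if all a_i are equal then p_{ij} = s_i s_j and p is marginally homogeneous. -/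
/-!
In a QSI_t table, `p i j - p j i` is a positive multiple of `(1 + t) * (a i - a j)`. So if `m`
maximises `(1 + t) * a`, then row `m` dominates column `m` entrywise. Marginal homogeneity at the
single index `m` makes the two sums equal, hence all the entries equal, and `a` is constant.
-/

section MarginalHomogeneity

variable {ι M : Type*} [Fintype ι] [AddCommMonoid M]

/-- Marginal homogeneity (MH) of a square table: the row and column marginals agree,
`p_{i+} = p_{+i}`. -/
def IsMarginallyHomogeneous (p : ι → ι → M) : Prop :=
  ∀ i, ∑ j, p i j = ∑ j, p j i

theorem IsMarginallyHomogeneous.of_symm {p : ι → ι → M} (hsymm : ∀ i j, p i j = p j i) :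
    IsMarginallyHomogeneous p :=
  fun i => Finset.sum_congr rfl fun j _ => hsymm i j

theorem IsMarginallyHomogeneous.score_eq [PartialOrder M] [IsOrderedCancelAddMonoid M]
    {α : Type*} [LinearOrder α] {p : ι → ι → M} {score : ι → α}
    (hp : IsMarginallyHomogeneous p)
    (hscore : ∀ i j, p j i ≤ p i j ↔ score j ≤ score i) (i j : ι) :
    score i = score j := by
  have : Nonempty ι := ⟨i⟩
  obtain ⟨m, hmax⟩ := Finite.exists_max score
  have column_le_row : ∀ k ∈ Finset.univ, p k m ≤ p m k := fun k _ => (hscore m k).2 (hmax k)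
  have column_eq_row : ∀ k ∈ Finset.univ, p k m = p m k :=
    (Finset.sum_eq_sum_iff_of_le column_le_row).1 (hp m).symm
  have score_eq_max (k : ι) : score k = score m :=
    (hmax k).antisymm ((hscore k m).1 (column_eq_row k (Finset.mem_univ k)).ge)
  rw [score_eq_max i, score_eq_max j]

end MarginalHomogeneity

section QuasisymmetricIndependence

variable {ι K : Type*} [DecidableEq ι] [Field K]

/-- The table of the quasisymmetric independence model QSI_t with parameters `s` and `a`. No
positivity is built in: an off-diagonal entry whose denominator vanishes is `s i * s j`. -/
def qsiTable (t : K) (s a : ι → K) (i j : ι) : K :=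
  if i = j then s i ^ 2
  else s i * s j * (1 + (1 + t) * (a i - a j) / (2 + (1 - t) * (a i + a j)))

theorem qsiTable_eq_mul_of_eq (t : K) (s : ι → K) {a : ι → K} {i j : ι} (ha : a i = a j) :
    qsiTable t s a i j = s i * s j := by
  rcases eq_or_ne i j with rfl | hij
  · simp [qsiTable, sq]
  · simp [qsiTable, hij, ha]

theorem qsiTable_sub_swap (t : K) (s a : ι → K) (i j : ι) :
    qsiTable t s a i j - qsiTable t s a j i =
      2 * (s i * s j) / (2 + (1 - t) * (a i + a j)) * ((1 + t) * a i - (1 + t) * a j) := by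
  rcases eq_or_ne i j with rfl | hij
  · simp
  · rw [qsiTable, qsiTable, if_neg hij, if_neg hij.symm, add_comm (a j) (a i)]
    ring

variable [LinearOrder K] [IsStrictOrderedRing K] {t : K} {s a : ι → K}

theorem qsiTable_swap_le_iff {i j : ι} (hsi : 0 < s i) (hsj : 0 < s j)
    (hden : i ≠ j → 0 < 2 + (1 - t) * (a i + a j)) :
    qsiTable t s a j i ≤ qsiTable t s a i j ↔ (1 + t) * a j ≤ (1 + t) * a i := by
  rcases eq_or_ne i j with rfl | hij
  · simp only [le_refl]
  · have hcoeff : 0 < 2 * (s i * s j) / (2 + (1 - t) * (a i + a j)) :=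
      div_pos (by positivity) (hden hij)
    rw [← sub_nonneg, qsiTable_sub_swap, mul_nonneg_iff_of_pos_left hcoeff, sub_nonneg]

theorem si_eq_MH_inter_QSI_t_general [Fintype ι] (ht : t ≠ -1) (hs : ∀ i, 0 < s i)
    (hden : ∀ i j, i ≠ j → 0 < 2 + (1 - t) * (a i + a j)) :
    List.TFAE [
      IsMarginallyHomogeneous (qsiTable t s a),
      ∀ i j, a i = a j,
      ∀ i j, qsiTable t s a i j = s i * s j] := by
  tfae_have 1 → 2 := fun hMH i j => by
    have hscore : (1 + t) * a i = (1 + t) * a j :=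
      hMH.score_eq (score := fun k => (1 + t) * a k)
        (fun k l => qsiTable_swap_le_iff (hs k) (hs l) (hden k l)) i j
    have ht' : 1 + t ≠ 0 := fun h => ht (eq_neg_of_add_eq_zero_right h)
    exact mul_left_cancel₀ ht' hscore
  tfae_have 2 → 3 := fun ha i j => qsiTable_eq_mul_of_eq t s (ha i j)
  tfae_have 3 → 1 := fun hSI => .of_symm fun i j => by rw [hSI, hSI, mul_comm]
  tfae_finish

end QuasisymmetricIndependence

/-- SI = MH ∩ QSI_t: for the quasisymmetric independence model
QSI_t with positive `s_i` and admissible `a`, marginal homogeneity forces all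
`a_i` to be equal and `p_{ij} = s_i·s_j` (symmetric independence); conversely,
if all `a_i` are equal then `p_{ij} = s_i·s_j` and `p` is marginally
homogeneous. -/
theorem si_eq_MH_inter_QSI_t (I : ℕ) (hI : 2 ≤ I) (t : ℝ)
    (ht : t ∈ Set.Icc (0 : ℝ) 1)
    (s : Fin I → ℝ) (hs : ∀ i, 0 < s i)
    (a : Fin I → ℝ)
    (hden : ∀ i j, 0 < 2 + (1 - t) * (a i + a j))
    (hfac : ∀ i j, i ≠ j →
      0 ≤ 1 + (1 + t) * (a i - a j) / (2 + (1 - t) * (a i + a j)))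
    (p : Fin I → Fin I → ℝ)
    (hp : ∀ i j, p i j = if i = j then s i ^ 2
      else s i * s j * (1 + (1 + t) * (a i - a j) / (2 + (1 - t) * (a i + a j)))) :
    ((∀ i, (∑ j, p i j) = ∑ j, p j i) →
      (∀ i j, a i = a j) ∧ (∀ i j, p i j = s i * s j)) ∧
    ((∀ i j, a i = a j) →
      (∀ i j, p i j = s i * s j) ∧ ∀ i, (∑ j, p i j) = ∑ j, p j i) := by
  obtain rfl : p = qsiTable t s a := funext₂ hp
  have htfae := si_eq_MH_inter_QSI_t_general (by linarith [ht.1]) hs fun i j _ => hden i j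
  exact ⟨fun hMH => ⟨(htfae.out 0 1).1 hMH, (htfae.out 0 2).1 hMH⟩,
    fun ha => ⟨(htfae.out 1 2).1 ha, (htfae.out 1 0).1 ha⟩⟩
end

section
/- (MLE of the symmetric part.) Let I ≥ 1 and let n = (n_{ij}) be an I×I matrix of positive reals with total n_{++} = Σ_{i,j} n_{ij}. Among all symmetric I×I matrices s = (s_{ij}) with all entries positive and Σ_{i,j} s_{ij} = 1, the function s ↦ Σ_{i,j} n_{ij}·log(s_{ij}) attains its maximum uniquely at ŝ_{ij} = (n_{ij} + n_{ji})/(2·n_{++}). -/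
/-!
Against a symmetric array, such as `log s`, summing with weights `n` is the same as summing with
weights `n₊₊ * ŝ`. So the objective is `n₊₊ * ∑ ŝ * log s`, and Gibbs' inequality says that among
probability vectors `s` this is largest exactly at `s = ŝ`.
-/

open Finset InformationTheory Real

section Gibbs

variable {α : Type*} {t : Finset α} {p q : α → ℝ}

theorem mul_klFun_div {x y : ℝ} (hxy : y = 0 → x = 0) :
    y * klFun (x / y) = x * log x - x * log y + (y - x) := by
  rcases eq_or_ne x 0 with rfl | hx
  · simp [klFun_apply]
  · have hy : y ≠ 0 := mt hxy hx
    rw [klFun_apply, log_div hx hy]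
    field_simp
    ring

theorem mul_klFun_div_nonneg {x y : ℝ} (hx : 0 ≤ x) (hy : 0 ≤ y) : 0 ≤ y * klFun (x / y) :=
  mul_nonneg hy (klFun_nonneg (div_nonneg hx hy))

theorem eq_of_mul_klFun_div_eq_zero {x y : ℝ} (hx : 0 ≤ x) (hy : 0 ≤ y) (hxy : y = 0 → x = 0)
    (h : y * klFun (x / y) = 0) : y = x := by
  rcases mul_eq_zero.mp h with hy0 | hkl
  · rw [hy0, hxy hy0]
  · exact (eq_of_div_eq_one ((klFun_eq_zero_iff (div_nonneg hx hy)).mp hkl)).symm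

theorem sum_mul_klFun_div (hpq : ∀ a ∈ t, q a = 0 → p a = 0) :
    ∑ a ∈ t, q a * klFun (p a / q a) =
      ∑ a ∈ t, p a * log (p a) - ∑ a ∈ t, p a * log (q a) + (∑ a ∈ t, q a - ∑ a ∈ t, p a) := by
  simp only [← sum_sub_distrib, ← sum_add_distrib]
  exact sum_congr rfl fun a ha => mul_klFun_div (hpq a ha)

theorem sum_mul_log_le_sum_mul_log_self (hp : ∀ a ∈ t, 0 ≤ p a) (hq : ∀ a ∈ t, 0 ≤ q a)
    (hpq : ∀ a ∈ t, q a = 0 → p a = 0) (hsum : ∑ a ∈ t, q a ≤ ∑ a ∈ t, p a) :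
    ∑ a ∈ t, p a * log (q a) ≤ ∑ a ∈ t, p a * log (p a) := by
  have hnonneg : 0 ≤ ∑ a ∈ t, q a * klFun (p a / q a) :=
    sum_nonneg fun a ha => mul_klFun_div_nonneg (hp a ha) (hq a ha)
  rw [sum_mul_klFun_div hpq] at hnonneg
  linarith

theorem eq_of_sum_mul_log_eq_sum_mul_log_self (hp : ∀ a ∈ t, 0 ≤ p a) (hq : ∀ a ∈ t, 0 ≤ q a)
    (hpq : ∀ a ∈ t, q a = 0 → p a = 0) (hsum : ∑ a ∈ t, q a ≤ ∑ a ∈ t, p a)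
    (heq : ∑ a ∈ t, p a * log (q a) = ∑ a ∈ t, p a * log (p a)) :
    ∀ a ∈ t, q a = p a := by
  have hnonneg : ∀ a ∈ t, 0 ≤ q a * klFun (p a / q a) := fun a ha =>
    mul_klFun_div_nonneg (hp a ha) (hq a ha)
  have hzero : ∑ a ∈ t, q a * klFun (p a / q a) = 0 := by
    refine le_antisymm ?_ (sum_nonneg hnonneg)
    rw [sum_mul_klFun_div hpq]
    linarith
  exact fun a ha => eq_of_mul_klFun_div_eq_zero (hp a ha) (hq a ha) (hpq a ha)
    ((sum_eq_zero_iff_of_nonneg hnonneg).mp hzero a ha)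

end Gibbs

section Symmetrization

variable {ι : Type*} [Fintype ι]

theorem sum_sum_add_swap_mul {R : Type*} [NonAssocSemiring R] (n : ι → ι → R) {f : ι → ι → R}
    (hf : ∀ i j, f i j = f j i) :
    ∑ i, ∑ j, (n i j + n j i) * f i j = 2 * ∑ i, ∑ j, n i j * f i j := by
  have hswap : ∑ i, ∑ j, n j i * f i j = ∑ i, ∑ j, n i j * f i j := by
    rw [sum_comm]
    simp only [hf]
  simp only [add_mul, sum_add_distrib, hswap, two_mul]

/-- The symmetric part of the table `n`, scaled to total mass `1`: the paper's estimate
`ŝ i j = (n i j + n j i) / (2 n₊₊)`. It is the zero table when `n₊₊ = 0`. -/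
noncomputable def normalizedSymmPart (n : ι → ι → ℝ) (i j : ι) : ℝ :=
  (n i j + n j i) / (2 * ∑ k, ∑ l, n k l)

namespace normalizedSymmPart

variable {n : ι → ι → ℝ}

theorem symm (n : ι → ι → ℝ) (i j : ι) : normalizedSymmPart n i j = normalizedSymmPart n j i := by
  rw [normalizedSymmPart, normalizedSymmPart, add_comm]

theorem nonneg (hn : ∀ i j, 0 ≤ n i j) (i j : ι) : 0 ≤ normalizedSymmPart n i j :=
  div_nonneg (add_nonneg (hn i j) (hn j i))
    (mul_nonneg zero_le_two (sum_nonneg fun k _ => sum_nonneg fun l _ => hn k l))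

theorem pos (hN : 0 < ∑ i, ∑ j, n i j) {i j : ι} (hij : 0 < n i j + n j i) :
    0 < normalizedSymmPart n i j :=
  div_pos hij (mul_pos two_pos hN)

theorem total_mul_sum_mul (hN : ∑ i, ∑ j, n i j ≠ 0) {f : ι → ι → ℝ} (hf : ∀ i j, f i j = f j i) :
    (∑ i, ∑ j, n i j) * ∑ i, ∑ j, normalizedSymmPart n i j * f i j = ∑ i, ∑ j, n i j * f i j := by
  simp only [normalizedSymmPart, div_mul_eq_mul_div, ← sum_div, sum_sum_add_swap_mul n hf]
  field_simp

theorem sum_eq_one (hN : ∑ i, ∑ j, n i j ≠ 0) : ∑ i, ∑ j, normalizedSymmPart n i j = 1 := by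
  have h := total_mul_sum_mul hN (f := fun _ _ => 1) fun _ _ => rfl
  simp only [mul_one] at h
  exact (mul_eq_left₀ hN).mp h

theorem eq_zero_of_symm_of_eq_zero {s : ι → ι → ℝ} (hs : ∀ i j, s i j = s j i)
    (hns : ∀ i j, s i j = 0 → n i j = 0) {i j : ι} (hij : s i j = 0) :
    normalizedSymmPart n i j = 0 := by
  rw [normalizedSymmPart, hns i j hij, hns j i (hs i j ▸ hij), add_zero, zero_div]

end normalizedSymmPart

-- A table `s` with `s i j = 0 < n i j` has likelihood `0`, whereas `Real.log 0 = 0` would ignore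
-- that cell; the support condition on `s` leaves out these tables.
theorem mle_symmetric_part_general {n : ι → ι → ℝ} (hn : ∀ i j, 0 ≤ n i j)
    (hN : 0 < ∑ i, ∑ j, n i j) :
    (∀ i j, normalizedSymmPart n i j = normalizedSymmPart n j i) ∧
    (∀ i j, 0 ≤ normalizedSymmPart n i j) ∧
    (∑ i, ∑ j, normalizedSymmPart n i j = 1) ∧
    ∀ s : ι → ι → ℝ,
      (∀ i j, s i j = s j i) → (∀ i j, 0 ≤ s i j) → (∀ i j, s i j = 0 → n i j = 0) →
      (∑ i, ∑ j, s i j = 1) →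
      (∑ i, ∑ j, n i j * log (s i j)) ≤ (∑ i, ∑ j, n i j * log (normalizedSymmPart n i j)) ∧
      ((∑ i, ∑ j, n i j * log (s i j)) = (∑ i, ∑ j, n i j * log (normalizedSymmPart n i j)) →
        s = normalizedSymmPart n) := by
  have hsymm := normalizedSymmPart.symm n
  have hnonneg := normalizedSymmPart.nonneg hn
  have hsum := normalizedSymmPart.sum_eq_one hN.ne'
  refine ⟨hsymm, hnonneg, hsum, fun s hs hs0 hns hs1 => ?_⟩
  have hsupp (x : ι × ι) (_ : x ∈ univ) : s x.1 x.2 = 0 → normalizedSymmPart n x.1 x.2 = 0 :=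
    normalizedSymmPart.eq_zero_of_symm_of_eq_zero hs hns
  have hmass : ∑ x : ι × ι, s x.1 x.2 ≤ ∑ x : ι × ι, normalizedSymmPart n x.1 x.2 := by
    simp only [Fintype.sum_prod_type, hs1, hsum, le_refl]
  rw [← normalizedSymmPart.total_mul_sum_mul hN.ne' fun i j => congrArg log (hs i j),
    ← normalizedSymmPart.total_mul_sum_mul hN.ne' fun i j => congrArg log (hsymm i j),
    mul_le_mul_iff_right₀ hN, mul_right_inj' hN.ne']
  simp only [← Fintype.sum_prod_type']
  refine ⟨sum_mul_log_le_sum_mul_log_self (fun x _ => hnonneg x.1 x.2) (fun x _ => hs0 x.1 x.2)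
    hsupp hmass, fun heq => ?_⟩
  have hcells := eq_of_sum_mul_log_eq_sum_mul_log_self (fun x _ => hnonneg x.1 x.2)
    (fun x _ => hs0 x.1 x.2) hsupp hmass heq
  exact funext₂ fun i j => hcells (i, j) (mem_univ _)

end Symmetrization

/-- MLE of the symmetric part: among symmetric positive matrices
`s` with total sum 1, the function `s ↦ Σ n_{ij}·log s_{ij}` attains its
maximum uniquely at `ŝ_{ij} = (n_{ij} + n_{ji})/(2 n_{++})`. -/
theorem mle_symmetric_part (I : ℕ) (hI : 1 ≤ I)
    (n : Fin I → Fin I → ℝ) (hn : ∀ i j, 0 < n i j)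
    (N : ℝ) (hN : N = ∑ i, ∑ j, n i j)
    (shat : Fin I → Fin I → ℝ)
    (hshat : ∀ i j, shat i j = (n i j + n j i) / (2 * N)) :
    (∀ i j, shat i j = shat j i) ∧ (∀ i j, 0 < shat i j) ∧
    (∑ i, ∑ j, shat i j = 1) ∧
    ∀ s : Fin I → Fin I → ℝ,
      (∀ i j, s i j = s j i) → (∀ i j, 0 < s i j) → (∑ i, ∑ j, s i j = 1) →
      (∑ i, ∑ j, n i j * Real.log (s i j))
          ≤ (∑ i, ∑ j, n i j * Real.log (shat i j)) ∧
      ((∑ i, ∑ j, n i j * Real.log (s i j))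
          = (∑ i, ∑ j, n i j * Real.log (shat i j)) → s = shat) := by
  obtain rfl : shat = normalizedSymmPart n := funext₂ fun i j => by
    rw [hshat, hN, normalizedSymmPart]
  have : Nonempty (Fin I) := ⟨⟨0, hI⟩⟩
  have hNpos : 0 < ∑ i, ∑ j, n i j :=
    sum_pos (fun i _ => sum_pos (fun j _ => hn i j) univ_nonempty) univ_nonempty
  obtain ⟨hsymm, -, hsum, hmax⟩ := mle_symmetric_part_general (fun i j => (hn i j).le) hNpos
  exact ⟨hsymm, fun i j => normalizedSymmPart.pos hNpos (add_pos (hn i j) (hn j i)), hsum,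
    fun s hs hs0 => hmax s hs (fun i j => (hs0 i j).le) fun i j h => absurd h (hs0 i j).ne'⟩
end

section
/- (QS_t is closest to symmetry in φ_t-divergence.) Fix t ∈ (0,1), let φ_t(u) = f_t(u) − f_t(1) − f_t′(1)(u−1) with f_t(u) = (u + 2t/(1−t))·log(u + 2t/(1−t)), and for positive I×I tables q, s define D_{φ_t}(q, s) = Σ_{i,j} s_{ij}·φ_t(q_{ij}/s_{ij}). Let s = (s_{ij}) be a symmetric I×I matrix with positive entries summing to 1, let a = (a_1,…,a_I) be reals with 2 + (1−t)(a_i + a_j) > 0 for all i,j, and define the QS_t table p by p_{ij} = s_{ij}·(1 + (1+t)(a_i − a_j)/(2 + (1−t)(a_i + a_j))); assume all p_{ij} > 0. Then for every I×I table q with q_{ij} > 0, satisfying q_{ij} + q_{ji} = 2·s_{ij} for all i,j and having the same row margins as p (q_{i+} = p_{i+} for all i), one has D_{φ_t}(q, s) ≥ D_{φ_t}(p, s). That is, among all tables with the given symmetric pairwise sums and the given row margins, the QS_t table minimizes the φ_t-divergence from the symmetric table s. -/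
/-!
The table `p` is a critical point of the convex function `q ↦ D_φ(q, s)` under the constraints.
With `c = 2t / (1 - t)`, the derivative of `φ_t` at `p i j / s i j` is `log (p i j / s i j + c)` up
to a constant, and `p i j / s i j + c` is a constant multiple of
`(1 + (1 - t) a i) / (2 + (1 - t) (a i + a j))`. Taking logarithms, the derivative is a function of
`i` plus a symmetric function of `(i, j)`. The first is orthogonal to `q - p` because the row
margins agree, the second because `q - p` is antisymmetric, so the tangent-line inequality for
`φ_t`, summed over all cells, gives the claim.
-/

theorem add_mul_sub_le_of_convexOn_of_hasDerivAt {S : Set ℝ} {f : ℝ → ℝ} {f' x y : ℝ}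
    (hf : ConvexOn ℝ S f) (hx : x ∈ S) (hy : y ∈ S) (hf' : HasDerivAt f f' x) :
    f x + f' * (y - x) ≤ f y := by
  rcases lt_trichotomy x y with hxy | rfl | hyx
  · have hslope := hf.le_slope_of_hasDerivAt hx hy hxy hf'
    rw [slope_def_field, le_div_iff₀ (sub_pos.2 hxy)] at hslope
    linarith
  · simp
  · have hslope := hf.slope_le_of_hasDerivAt hy hx hyx hf'
    rw [slope_def_field, div_le_iff₀ (sub_pos.2 hyx)] at hslope
    linarith

theorem sum_sum_eq_zero_of_antisymm {ι M : Type*} [Fintype ι] [AddCommGroup M]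
    [IsAddTorsionFree M] {F : ι → ι → M} (hF : ∀ i j, F j i = -F i j) :
    ∑ i, ∑ j, F i j = 0 := by
  refine self_eq_neg.1 ?_
  calc ∑ i, ∑ j, F i j = ∑ i, ∑ j, F j i := Finset.sum_comm
    _ = -∑ i, ∑ j, F i j := by simp only [← Finset.sum_neg_distrib, ← hF]

theorem sum_sum_antisymm_mul_add_symm_eq_zero {ι R : Type*} [Fintype ι] [NonUnitalNonAssocRing R]
    [IsAddTorsionFree R] {d γ : ι → ι → R} {α : ι → R} (hrow : ∀ i, ∑ j, d i j = 0)
    (hd : ∀ i j, d j i = -d i j) (hγ : ∀ i j, γ j i = γ i j) :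
    ∑ i, ∑ j, d i j * (α i + γ i j) = 0 := by
  have hsumα : ∑ i, ∑ j, d i j * α i = 0 := by
    simp only [← Finset.sum_mul, hrow, zero_mul, Finset.sum_const_zero]
  have hsumγ : ∑ i, ∑ j, d i j * γ i j = 0 :=
    sum_sum_eq_zero_of_antisymm fun i j => by rw [hd, hγ, neg_mul]
  simp only [mul_add, Finset.sum_add_distrib, hsumα, hsumγ, add_zero]

/-- The `φ`-divergence `D_φ(q, s)` of the table `q` from the table `s`. It is meaningful only where
`s` has no zero entry. -/
noncomputable def phiDivergence {ι : Type*} [Fintype ι] (φ : ℝ → ℝ) (q s : ι → ι → ℝ) : ℝ :=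
  ∑ i, ∑ j, s i j * φ (q i j / s i j)

theorem phiDivergence_le_of_hasDerivAt_add_symm {ι : Type*} [Fintype ι] {S : Set ℝ} {φ : ℝ → ℝ}
    (hφ : ConvexOn ℝ S φ) {p q s : ι → ι → ℝ} (hs : ∀ i j, 0 < s i j)
    (hpS : ∀ i j, p i j / s i j ∈ S) (hqS : ∀ i j, q i j / s i j ∈ S)
    {α : ι → ℝ} {γ : ι → ι → ℝ} (hderiv : ∀ i j, HasDerivAt φ (α i + γ i j) (p i j / s i j))
    (hγ : ∀ i j, γ j i = γ i j) (hpair : ∀ i j, q i j + q j i = p i j + p j i)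
    (hrow : ∀ i, ∑ j, q i j = ∑ j, p i j) :
    phiDivergence φ p s ≤ phiDivergence φ q s := by
  have hcell : ∀ i j, s i j * φ (p i j / s i j) + (q i j - p i j) * (α i + γ i j)
      ≤ s i j * φ (q i j / s i j) := fun i j => by
    have htangent := add_mul_sub_le_of_convexOn_of_hasDerivAt hφ (hpS i j) (hqS i j) (hderiv i j)
    calc s i j * φ (p i j / s i j) + (q i j - p i j) * (α i + γ i j)
        = s i j * (φ (p i j / s i j) + (α i + γ i j) * (q i j / s i j - p i j / s i j)) := by
          field_simp [(hs i j).ne']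
      _ ≤ s i j * φ (q i j / s i j) := mul_le_mul_of_nonneg_left htangent (hs i j).le
  have horth : ∑ i, ∑ j, (q i j - p i j) * (α i + γ i j) = 0 :=
    sum_sum_antisymm_mul_add_symm_eq_zero (fun i => by rw [Finset.sum_sub_distrib, hrow, sub_self])
      (fun i j => by linarith [hpair i j]) hγ
  calc phiDivergence φ p s
      = ∑ i, ∑ j, (s i j * φ (p i j / s i j) + (q i j - p i j) * (α i + γ i j)) := by
        simp only [Finset.sum_add_distrib, horth, add_zero, phiDivergence]
    _ ≤ phiDivergence φ q s :=
        Finset.sum_le_sum fun i _ => Finset.sum_le_sum fun j _ => hcell i j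

/-- The gap between `f` and its tangent line at `x₀`. It turns a function `f` that is convex and
differentiable at `1` into a divergence generator `φ` with `φ 1 = deriv φ 1 = 0`, on taking
`x₀ = 1`. -/
noncomputable def tangentGap (f : ℝ → ℝ) (x₀ u : ℝ) : ℝ :=
  f u - f x₀ - deriv f x₀ * (u - x₀)

theorem convexOn_tangentGap {S : Set ℝ} {f : ℝ → ℝ} (hf : ConvexOn ℝ S f) (x₀ : ℝ) :
    ConvexOn ℝ S (tangentGap f x₀) := by
  refine ⟨hf.1, fun x hx y hy a b ha hb hab => ?_⟩
  have hconv := hf.2 hx hy ha hb hab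
  obtain rfl : b = 1 - a := by linarith
  simp only [tangentGap, smul_eq_mul] at hconv ⊢
  linarith

theorem hasDerivAt_tangentGap {f : ℝ → ℝ} {f' u : ℝ} (hf : HasDerivAt f f' u) (x₀ : ℝ) :
    HasDerivAt (tangentGap f x₀) (f' - deriv f x₀) u := by
  have hlinear : HasDerivAt (fun u => deriv f x₀ * (u - x₀)) (deriv f x₀) u := by
    simpa using ((hasDerivAt_id' u).sub_const x₀).const_mul (deriv f x₀)
  exact (hf.sub_const (f x₀)).sub hlinear

/-- The function `f_t`, whose tangent gap at `1` is the generator `φ_t`. -/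
noncomputable def qsGenerator (t u : ℝ) : ℝ :=
  (u + 2 * t / (1 - t)) * Real.log (u + 2 * t / (1 - t))

theorem convexOn_qsGenerator (t : ℝ) :
    ConvexOn ℝ (Set.Ici (-(2 * t / (1 - t)))) (qsGenerator t) := by
  have h := Real.convexOn_mul_log.translate_left (2 * t / (1 - t))
  rwa [Set.preimage_const_add_Ici, zero_sub] at h

theorem hasDerivAt_qsGenerator {t u : ℝ} (hu : u + 2 * t / (1 - t) ≠ 0) :
    HasDerivAt (qsGenerator t) (Real.log (u + 2 * t / (1 - t)) + 1) u :=
  (Real.hasDerivAt_mul_log hu).comp_add_const u _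

/-- The `QS_t` table with symmetric part `s` and parameters `a`. -/
noncomputable def qsTable {ι : Type*} (t : ℝ) (s : ι → ι → ℝ) (a : ι → ℝ) (i j : ι) : ℝ :=
  s i j * (1 + (1 + t) * (a i - a j) / (2 + (1 - t) * (a i + a j)))

section QSTable

variable {ι : Type*} {t : ℝ} {s : ι → ι → ℝ} {a : ι → ℝ} {i j : ι}

theorem qsTable_add_swap (hs : s j i = s i j) :
    qsTable t s a i j + qsTable t s a j i = 2 * s i j := by
  rw [qsTable, qsTable, hs, add_comm (a j) (a i)]
  ring

theorem qsTable_div_add_eq (ht : t ≠ 1) (hs : s i j ≠ 0) (hden : 2 + (1 - t) * (a i + a j) ≠ 0) :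
    qsTable t s a i j / s i j + 2 * t / (1 - t)
      = 2 * (1 + t) / (1 - t) * (1 + (1 - t) * a i) / (2 + (1 - t) * (a i + a j)) := by
  have h1t : 1 - t ≠ 0 := sub_ne_zero.2 ht.symm
  rw [qsTable, mul_div_cancel_left₀ _ hs]
  field_simp
  ring

theorem qsTable_div_add_pos (ht : t ∈ Set.Ioo (-1 : ℝ) 1) (hs : s i j ≠ 0)
    (hrow : 0 < 1 + (1 - t) * a i) (hden : 0 < 2 + (1 - t) * (a i + a j)) :
    0 < qsTable t s a i j / s i j + 2 * t / (1 - t) := by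
  have hadd : 0 < 1 + t := by linarith [ht.1]
  have hsub : 0 < 1 - t := sub_pos.2 ht.2
  rw [qsTable_div_add_eq ht.2.ne hs hden.ne']
  positivity

theorem log_qsTable_div_add (ht : t ≠ 1) (hadd : 1 + t ≠ 0) (hs : s i j ≠ 0)
    (hrow : 1 + (1 - t) * a i ≠ 0) (hden : 2 + (1 - t) * (a i + a j) ≠ 0) :
    Real.log (qsTable t s a i j / s i j + 2 * t / (1 - t))
      = Real.log (1 + (1 - t) * a i)
        + (Real.log (2 * (1 + t) / (1 - t)) - Real.log (2 + (1 - t) * (a i + a j))) := by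
  have hconst : 2 * (1 + t) / (1 - t) ≠ 0 :=
    div_ne_zero (mul_ne_zero two_ne_zero hadd) (sub_ne_zero.2 ht.symm)
  rw [qsTable_div_add_eq ht hs hden, Real.log_div (mul_ne_zero hconst hrow) hden,
    Real.log_mul hconst hrow]
  ring

end QSTable

theorem qs_t_minimizes_phi_divergence_general {ι : Type*} [Fintype ι] {t : ℝ}
    (ht : t ∈ Set.Ioo (-1 : ℝ) 1) {s : ι → ι → ℝ} (hs : ∀ i j, 0 < s i j) {a : ι → ℝ}
    (hden : ∀ i j, 0 < 2 + (1 - t) * (a i + a j)) {q : ι → ι → ℝ}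
    (hq : ∀ i j, -(2 * t / (1 - t)) ≤ q i j / s i j)
    (hpair : ∀ i j, q i j + q j i = 2 * s i j)
    (hrow : ∀ i, ∑ j, q i j = ∑ j, qsTable t s a i j) :
    phiDivergence (tangentGap (qsGenerator t) 1) (qsTable t s a) s
      ≤ phiDivergence (tangentGap (qsGenerator t) 1) q s := by
  have hsymm : ∀ i j, s j i = s i j := fun i j => by linarith [hpair i j, hpair j i]
  have hparam : ∀ i, 0 < 1 + (1 - t) * a i := fun i => by linarith [hden i i]
  have hpos : ∀ i j, 0 < qsTable t s a i j / s i j + 2 * t / (1 - t) := fun i j =>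
    qsTable_div_add_pos ht (hs i j).ne' (hparam i) (hden i j)
  let α : ι → ℝ := fun i => Real.log (1 + (1 - t) * a i)
  let γ : ι → ι → ℝ := fun i j => Real.log (2 * (1 + t) / (1 - t))
    - Real.log (2 + (1 - t) * (a i + a j)) + 1 - deriv (qsGenerator t) 1
  have hderiv : ∀ i j, HasDerivAt (tangentGap (qsGenerator t) 1) (α i + γ i j)
      (qsTable t s a i j / s i j) := fun i j => by
    convert hasDerivAt_tangentGap (hasDerivAt_qsGenerator (hpos i j).ne') 1 using 1
    rw [log_qsTable_div_add ht.2.ne (by linarith [ht.1]) (hs i j).ne' (hparam i).ne' (hden i j).ne']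
    ring
  exact phiDivergence_le_of_hasDerivAt_add_symm (convexOn_tangentGap (convexOn_qsGenerator t) 1) hs
    (fun i j => neg_le_iff_add_nonneg.2 (hpos i j).le) hq hderiv
    (fun i j => by simp only [γ, add_comm (a j)])
    (fun i j => by rw [hpair, qsTable_add_swap (hsymm i j)]) hrow

/-- QS_t is closest to symmetry in φ_t-divergence: fix
`t ∈ (0,1)` and let `φ_t(u) = f_t(u) − f_t(1) − f_t′(1)(u−1)` with
`f_t(u) = (u + 2t/(1−t))·log(u + 2t/(1−t))`. Let `s` be a positive symmetric
probability table and `p` the QS_t table built from `s` and parameters `a`.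
Then every positive table `q` with `q_{ij} + q_{ji} = 2 s_{ij}` and the same
row margins as `p` satisfies `D_{φ_t}(q, s) ≥ D_{φ_t}(p, s)`. -/
theorem qs_t_minimizes_phi_divergence (I : ℕ) (hI : 2 ≤ I)
    (t : ℝ) (ht : t ∈ Set.Ioo (0 : ℝ) 1)
    (f φ : ℝ → ℝ)
    (hf : ∀ u, f u = (u + 2 * t / (1 - t)) * Real.log (u + 2 * t / (1 - t)))
    (hφ : ∀ u, φ u = f u - f 1 - deriv f 1 * (u - 1))
    (s : Fin I → Fin I → ℝ)
    (hssymm : ∀ i j, s i j = s j i)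
    (hspos : ∀ i j, 0 < s i j)
    (hssum : ∑ i, ∑ j, s i j = 1)
    (a : Fin I → ℝ)
    (hden : ∀ i j, 0 < 2 + (1 - t) * (a i + a j))
    (p : Fin I → Fin I → ℝ)
    (hp : ∀ i j, p i j
      = s i j * (1 + (1 + t) * (a i - a j) / (2 + (1 - t) * (a i + a j))))
    (hppos : ∀ i j, 0 < p i j)
    (q : Fin I → Fin I → ℝ)
    (hqpos : ∀ i j, 0 < q i j)
    (hqpair : ∀ i j, q i j + q j i = 2 * s i j)
    (hqmarg : ∀ i, (∑ j, q i j) = ∑ j, p i j) :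
    (∑ i, ∑ j, s i j * φ (p i j / s i j))
      ≤ ∑ i, ∑ j, s i j * φ (q i j / s i j) := by
  obtain rfl : f = qsGenerator t := funext hf
  obtain rfl : φ = tangentGap (qsGenerator t) 1 := funext hφ
  obtain rfl : p = qsTable t s a := funext₂ hp
  have hshift : 0 ≤ 2 * t / (1 - t) := div_nonneg (by linarith [ht.1]) (by linarith [ht.2])
  exact qs_t_minimizes_phi_divergence_general ⟨by linarith [ht.1], ht.2⟩ hspos hden
    (fun i j => (neg_nonpos.2 hshift).trans (div_pos (hqpos i j) (hspos i j)).le) hqpair hqmarg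
end
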